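/- arXiv:1305.4449 — 6 statements merged into one kernel-verified Lean document; each statement's English description precedes it below -/
import Mathlib

section
/- Let μ > 0 be real and n ≥ 0 an integer, and let C be the monic Charlier polynomial of degree n for parameter μ. Then for n ≥ 1, [Σ_{x=0}^∞ ω(x)(C(x+1) − C(x))²] / [Σ_{x=0}^∞ ω(x) C(x)²] = n/μ, where ω(x) = e^{−μ} μ^x / x!; that is, the relative Fisher information of the Charlier polynomials is I_ω[C_n^μ] = n/μ. -/
/-!
Let `L` be the expectation under the Poisson weight. Shifting the summation index gives the
Stein–Chen identity `L (X p) = μ L (p(X + 1))`. Write `Δp = p(X + 1) - p` and `∇p = p - p(X - 1)`,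
so that `∇p (X + 1) = Δp`. If `p` has degree at most `n` and is orthogonal to all polynomials
of degree less than `n`, then `L (p Δp) = 0`, so
`μ L ((Δp)²) = μ L (p(X + 1) Δp) = L (p · X ∇p) = n L (p²)`; the last step holds because `X ∇p` and
`n p` have the same coefficient in degree `n`.
-/

open Polynomial

theorem coeff_taylor_of_natDegree_le_succ {R : Type*} [CommSemiring R] {p : R[X]} {m : ℕ}
    (hp : p.natDegree ≤ m + 1) (r : R) :
    (taylor r p).coeff m = p.coeff m + (m + 1) * r * p.coeff (m + 1) := by
  have hderiv : (hasseDeriv m p).natDegree < 2 := by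
    have := natDegree_hasseDeriv_le p m
    omega
  rw [taylor_coeff, eval_eq_sum_range' hderiv, Finset.sum_range_succ, Finset.sum_range_one,
    hasseDeriv_coeff, hasseDeriv_coeff, zero_add, add_comm 1 m, Nat.choose_self,
    Nat.choose_succ_self_right]
  push_cast
  ring

theorem map_mul_eq_zero_of_degree_lt {R : Type*} [CommSemiring R] {L : R[X] →ₗ[R] R} {p : R[X]}
    {n : ℕ} (horth : ∀ k < n, L (p * X ^ k) = 0) {q : R[X]} (hq : q.degree < n) :
    L (p * q) = 0 := by
  have hle : degreeLT R n ≤ LinearMap.ker (L ∘ₗ LinearMap.mulLeft R p) := by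
    classical
    rw [degreeLT_eq_span_X_pow, Submodule.span_le]
    simpa [Set.subset_def] using horth
  exact hle (mem_degreeLT.mpr hq)

section CommRing

variable {R : Type*} [CommRing R] {p : R[X]} {n : ℕ}

theorem degree_taylor_sub_lt (hp : p.natDegree ≤ n) (r : R) : (taylor r p - p).degree < n := by
  rw [degree_lt_iff_coeff_zero]
  intro m hm
  have hnext : p.coeff (m + 1) = 0 := coeff_eq_zero_of_natDegree_lt (by omega)
  rw [coeff_sub, coeff_taylor_of_natDegree_le_succ (by omega), hnext]
  ring

theorem degree_X_mul_sub_taylor_neg_one_sub_lt (hp : p.natDegree ≤ n) :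
    (X * (p - taylor (-1) p) - (n : R) • p).degree < (n : WithBot ℕ) := by
  rw [degree_lt_iff_coeff_zero]
  rintro (_ | m) hm
  · simp [Nat.le_zero.mp hm]
  rw [coeff_sub, coeff_X_mul, coeff_sub, coeff_taylor_of_natDegree_le_succ (by omega), coeff_smul,
    smul_eq_mul]
  obtain rfl | hlt := hm.eq_or_lt
  · push_cast
    ring
  · rw [coeff_eq_zero_of_natDegree_lt (by omega : p.natDegree < m + 1)]
    ring

theorem mul_map_taylor_one_sub_sq_of_stein {L : R[X] →ₗ[R] R} {μ : R}
    (hstein : ∀ q, L (X * q) = μ * L (taylor 1 q)) (hp : p.natDegree ≤ n)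
    (horth : ∀ k < n, L (p * X ^ k) = 0) :
    μ * L ((taylor 1 p - p) ^ 2) = n * L (p ^ 2) := by
  have hforward : L (p * (taylor 1 p - p)) = 0 :=
    map_mul_eq_zero_of_degree_lt horth (degree_taylor_sub_lt hp 1)
  have hbackward : L (p * (X * (p - taylor (-1) p) - (n : R) • p)) = 0 :=
    map_mul_eq_zero_of_degree_lt horth (degree_X_mul_sub_taylor_neg_one_sub_lt hp)
  have hshift : taylor 1 (p * (p - taylor (-1) p)) = taylor 1 p * (taylor 1 p - p) := by
    rw [taylor_mul, map_sub, taylor_taylor, add_neg_cancel, taylor_zero]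
  calc μ * L ((taylor 1 p - p) ^ 2)
      = μ * L (taylor 1 p * (taylor 1 p - p)) := by
        rw [sq, sub_mul (taylor 1 p) p, map_sub, hforward, sub_zero]
    _ = L (X * (p * (p - taylor (-1) p))) := by rw [hstein, hshift]
    _ = L (p * ((n : R) • p)) := by
        rwa [mul_sub p, map_sub, sub_eq_zero, mul_left_comm] at hbackward
    _ = n * L (p ^ 2) := by rw [mul_smul_comm, map_smul, smul_eq_mul, sq]

end CommRing

theorem summable_pow_div_factorial_mul_pow (μ : ℝ) (k : ℕ) :
    Summable fun x : ℕ => μ ^ x / x.factorial * (x : ℝ) ^ k := by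
  refine .of_norm_bounded
    ((Real.summable_pow_div_factorial (|μ| * Real.exp 1)).mul_left (k.factorial : ℝ)) fun x => ?_
  have hexp : (x : ℝ) ^ k ≤ Real.exp 1 ^ x * k.factorial := by
    rw [← Real.exp_nat_mul, mul_one, ← div_le_iff₀ (by positivity)]
    exact Real.pow_div_factorial_le_exp (x : ℝ) x.cast_nonneg k
  calc ‖μ ^ x / x.factorial * (x : ℝ) ^ k‖
      = |μ| ^ x / x.factorial * (x : ℝ) ^ k := by simp
    _ ≤ |μ| ^ x / x.factorial * (Real.exp 1 ^ x * k.factorial) := by gcongr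
    _ = k.factorial * ((|μ| * Real.exp 1) ^ x / x.factorial) := by rw [mul_pow]; ring

theorem summable_poisson_mul_eval (μ : ℝ) (p : ℝ[X]) :
    Summable fun x : ℕ => Real.exp (-μ) * μ ^ x / x.factorial * p.eval (x : ℝ) := by
  induction p using Polynomial.induction_on' with
  | add p q hp hq => simpa only [eval_add, mul_add] using hp.add hq
  | monomial k a =>
    simp only [eval_monomial]
    exact ((summable_pow_div_factorial_mul_pow μ k).mul_left (Real.exp (-μ) * a)).congr
      fun x => by ring

/-- The expectation of a polynomial under the Poisson weight `e^{-μ} μ^x / x!`, as a linear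
functional. The series converge for every real `μ`, so the parameter is not restricted to the
positive reals, for which the weight is a probability. -/
noncomputable def poissonExpectation (μ : ℝ) : ℝ[X] →ₗ[ℝ] ℝ where
  toFun p := ∑' x : ℕ, Real.exp (-μ) * μ ^ x / x.factorial * p.eval (x : ℝ)
  map_add' p q := by
    simp only [eval_add, mul_add]
    exact (summable_poisson_mul_eval μ p).tsum_add (summable_poisson_mul_eval μ q)
  map_smul' a p := by
    simp only [eval_smul, smul_eq_mul, RingHom.id_apply, ← tsum_mul_left, mul_left_comm]

theorem poissonExpectation_apply (μ : ℝ) (p : ℝ[X]) :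
    poissonExpectation μ p =
      ∑' x : ℕ, Real.exp (-μ) * μ ^ x / x.factorial * p.eval (x : ℝ) := rfl

theorem poissonExpectation_X_mul (μ : ℝ) (p : ℝ[X]) :
    poissonExpectation μ (X * p) = μ * poissonExpectation μ (taylor 1 p) := by
  rw [poissonExpectation_apply, poissonExpectation_apply,
    (summable_poisson_mul_eval μ (X * p)).tsum_eq_zero_add, ← tsum_mul_left]
  simp only [eval_mul, eval_X, Nat.cast_zero, zero_mul, mul_zero, zero_add, taylor_eval]
  refine tsum_congr fun x => ?_
  rw [Nat.factorial_succ]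
  push_cast
  field_simp
  ring

theorem poissonExpectation_sq_pos {μ : ℝ} (hμ : 0 < μ) {p : ℝ[X]} (hp : p ≠ 0) :
    0 < poissonExpectation μ (p ^ 2) := by
  obtain ⟨x, hx⟩ : ∃ x : ℕ, p.eval (x : ℝ) ≠ 0 := by
    by_contra! hzero
    refine hp (p.eq_zero_of_infinite_isRoot ?_)
    exact (Set.infinite_range_of_injective (Nat.cast_injective (R := ℝ))).mono
      (Set.range_subset_iff.mpr hzero)
  rw [poissonExpectation_apply]
  refine (summable_poisson_mul_eval μ (p ^ 2)).tsum_pos (fun y => ?_) x ?_ <;>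
    rw [eval_pow] <;> positivity

/-- The relative Fisher information of the monic Charlier polynomial of degree `n ≥ 1`
with respect to the Poisson weight `ω(x) = e^{-μ} μ^x / x!` equals `n/μ`. -/
theorem charlier_relative_fisher
    (μ : ℝ) (hμ : 0 < μ) (n : ℕ) (hn : 1 ≤ n)
    (C : Polynomial ℝ) (hmonic : C.Monic) (hdeg : C.natDegree = n)
    (horth : ∀ k : ℕ, k < n →
      ∑' x : ℕ, (Real.exp (-μ) * μ ^ x / x.factorial) * C.eval (x : ℝ) * (x : ℝ) ^ k = 0) :
    (∑' x : ℕ, (Real.exp (-μ) * μ ^ x / x.factorial) *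
        (C.eval ((x : ℝ) + 1) - C.eval (x : ℝ)) ^ 2) /
      (∑' x : ℕ, (Real.exp (-μ) * μ ^ x / x.factorial) * (C.eval (x : ℝ)) ^ 2)
    = n / μ := by
  have horth' : ∀ k < n, poissonExpectation μ (C * X ^ k) = 0 := fun k hk => by
    simpa only [poissonExpectation_apply, eval_mul, eval_pow, eval_X, mul_assoc] using horth k hk
  have hnorm : poissonExpectation μ (C ^ 2) ≠ 0 :=
    (poissonExpectation_sq_pos hμ hmonic.ne_zero).ne'
  have hfisher : μ * poissonExpectation μ ((taylor 1 C - C) ^ 2) =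
      n * poissonExpectation μ (C ^ 2) :=
    mul_map_taylor_one_sub_sq_of_stein (poissonExpectation_X_mul μ) hdeg.le horth'
  rw [mul_comm, ← div_eq_div_iff hnorm hμ.ne'] at hfisher
  simpa only [poissonExpectation_apply, eval_pow, eval_sub, taylor_eval] using hfisher
end

section
/- Let γ > 0 and 0 < μ < 1 be real and n ≥ 1 an integer. Then the forward difference of the monic Meixner polynomial of degree n satisfies, for all real x, M_n^{γ,μ}(x+1) − M_n^{γ,μ}(x) = n Σ_{j=0}^{n-1} (j+1)_{n-j-1} (μ/(μ−1))^{n-j-1} M_j^{γ,μ}(x). -/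
/-- Pochhammer symbol `(a)_k = a(a+1)⋯(a+k-1)`. -/
noncomputable def poch (a : ℝ) (k : ℕ) : ℝ := ∏ i ∈ Finset.range k, (a + i)

/-!
Write `L_γ` for summation against the Meixner weight with parameters `γ` and `μ`, and `Δ` for the
forward difference. The identities `γ L_{γ+1}(p) = L_γ((x + γ) p)` and
`γ μ L_{γ+1}(p(x + 1)) = L_γ(x p)` show that both `Δ M_{m+1}` and `M_m + μ / (μ - 1) Δ M_m` are
orthogonal for `L_{γ+1}` to all polynomials of degree less than `m`. They have degree `m` and
leading coefficients `m + 1` and `1`, so definiteness of `L_{γ+1}` forces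
`Δ M_{m+1} = (m + 1) (M_m + μ / (μ - 1) Δ M_m)`, and iterating this recurrence gives the expansion.
-/

open Polynomial Filter Topology

section Polynomial

variable {R : Type*}

theorem mul_mem_degreeLT_of_natDegree_le [Semiring R] {p q : R[X]} {i m : ℕ}
    (hp : p.natDegree ≤ i) (hq : q ∈ degreeLT R m) : p * q ∈ degreeLT R (m + i) := by
  rw [mem_degreeLT, degree_lt_iff_coeff_zero] at hq ⊢
  intro k hk
  rw [coeff_mul]
  refine Finset.sum_eq_zero fun x hx => ?_
  have hxk : x.1 + x.2 = k := Finset.HasAntidiagonal.mem_antidiagonal.1 hx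
  rcases lt_or_ge i x.1 with hix | hix
  · rw [coeff_eq_zero_of_natDegree_lt (hp.trans_lt hix), zero_mul]
  · rw [hq x.2 (by omega), mul_zero]

theorem coeff_taylor_of_natDegree_le_add_one [CommSemiring R] {p : R[X]} {k : ℕ}
    (hp : p.natDegree ≤ k + 1) (r : R) :
    (taylor r p).coeff k = p.coeff k + (k + 1) * p.coeff (k + 1) * r := by
  have hdeg : (hasseDeriv k p).natDegree < 2 := by
    have := natDegree_hasseDeriv_le p k
    omega
  rw [taylor_coeff, eval_eq_sum_range' hdeg]
  simp [Finset.sum_range_succ, hasseDeriv_coeff, add_comm 1 k]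

variable [CommRing R]

theorem taylor_sub_self_mem_degreeLT {p : R[X]} {m : ℕ} (hp : p ∈ degreeLT R (m + 1)) (r : R) :
    taylor r p - p ∈ degreeLT R m := by
  rw [mem_degreeLT, degree_lt_iff_coeff_zero] at hp ⊢
  intro k hk
  have hdeg : p.natDegree ≤ k + 1 :=
    natDegree_le_iff_coeff_eq_zero.2 fun i hi => hp i (by omega)
  rw [coeff_sub, coeff_taylor_of_natDegree_le_add_one hdeg, hp (k + 1) (by omega)]
  simp

theorem X_mul_taylor_sub_self_mem_degreeLT {p : R[X]} {m : ℕ} (hp : p ∈ degreeLT R m) (r : R) :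
    X * (taylor r p - p) ∈ degreeLT R m := by
  cases m with
  | zero =>
    obtain rfl : p = 0 := by simpa [mem_degreeLT] using hp
    simp
  | succ m =>
    exact mul_mem_degreeLT_of_natDegree_le natDegree_X_le (taylor_sub_self_mem_degreeLT hp r)

theorem taylor_sub_self_sub_smul_mem_degreeLT {p q : R[X]} {m : ℕ} (hp : p.natDegree ≤ m + 1)
    (hq : q.natDegree ≤ m) (hpq : p.coeff (m + 1) = q.coeff m) (r : R) :
    taylor r p - p - (((m : R) + 1) * r) • q ∈ degreeLT R m := by
  rw [mem_degreeLT, degree_lt_iff_coeff_zero]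
  intro k hk
  rw [coeff_sub, coeff_sub, coeff_taylor_of_natDegree_le_add_one (by omega), coeff_smul,
    smul_eq_mul]
  rcases hk.eq_or_lt with rfl | hk
  · rw [hpq]
    ring
  · rw [coeff_eq_zero_of_natDegree_lt (show p.natDegree < k + 1 by omega),
      coeff_eq_zero_of_natDegree_lt (hq.trans_lt hk)]
    ring

end Polynomial

section Orthogonality

variable {R : Type*} [CommSemiring R] {L : R[X] →ₗ[R] R} {m : ℕ} {p : R[X]}

/-- The polynomials orthogonal to all polynomials of degree less than `m`, for the bilinear form
`(q, p) ↦ L (q * p)` attached to a linear functional `L`. -/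
noncomputable def orthogonalDegreeLT (L : R[X] →ₗ[R] R) (m : ℕ) : Submodule R R[X] :=
  LinearMap.BilinForm.orthogonal ((LinearMap.mul R R[X]).compr₂ L) (degreeLT R m)

theorem mem_orthogonalDegreeLT :
    p ∈ orthogonalDegreeLT L m ↔ ∀ q ∈ degreeLT R m, L (q * p) = 0 :=
  Iff.rfl

theorem mem_orthogonalDegreeLT_iff_X_pow :
    p ∈ orthogonalDegreeLT L m ↔ ∀ k < m, L (X ^ k * p) = 0 := by
  classical
  refine ⟨fun hp k hk => hp _ ?_, fun hp => ?_⟩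
  · rw [mem_degreeLT]
    exact (degree_X_pow_le k).trans_lt (by exact_mod_cast hk)
  · suffices degreeLT R m ≤ LinearMap.ker (L ∘ₗ LinearMap.mulRight R p) from
      fun q hq => this hq
    rw [degreeLT_eq_span_X_pow, Submodule.span_le]
    intro q hq
    obtain ⟨k, hk, rfl⟩ := Finset.mem_image.1 hq
    exact hp k (Finset.mem_range.1 hk)

theorem eq_of_mem_orthogonalDegreeLT {R : Type*} [CommRing R] {L : R[X] →ₗ[R] R} {p q : R[X]}
    (hL : ∀ r, L (r * r) = 0 → r = 0) (hp : p ∈ orthogonalDegreeLT L m)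
    (hq : q ∈ orthogonalDegreeLT L m) (hpq : p - q ∈ degreeLT R m) : p = q :=
  sub_eq_zero.1 (hL _ (Submodule.sub_mem _ hp hq _ hpq))

/-- `p` is the monic orthogonal polynomial of degree `m` for the linear functional `L`. -/
structure IsMonicOrthogonal (L : R[X] →ₗ[R] R) (m : ℕ) (p : R[X]) : Prop where
  monic : p.Monic
  natDegree_eq : p.natDegree = m
  mem_orthogonalDegreeLT : p ∈ orthogonalDegreeLT L m

theorem IsMonicOrthogonal.coeff_eq_one (hp : IsMonicOrthogonal L m p) : p.coeff m = 1 :=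
  hp.natDegree_eq ▸ hp.monic.coeff_natDegree

theorem IsMonicOrthogonal.mem_degreeLT (hp : IsMonicOrthogonal L m p) : p ∈ degreeLT R (m + 1) := by
  rw [degreeLT_succ_eq_degreeLE, mem_degreeLE]
  exact degree_le_of_natDegree_le hp.natDegree_eq.le

end Orthogonality

section MomentFunctional

variable {w : ℕ → ℝ}

/-- The linear functional `p ↦ ∑ x, w x * p x` on polynomials attached to a weight `w` on `ℕ`. It
is defined through the moments of `w`, so that it is linear even when these series diverge; it
agrees with the sum when all moments converge. -/
noncomputable def momentFunctional (w : ℕ → ℝ) : ℝ[X] →ₗ[ℝ] ℝ :=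
  lsum fun k => LinearMap.toSpanSingleton ℝ ℝ (∑' x : ℕ, w x * (x : ℝ) ^ k)

theorem hasSum_momentFunctional (hw : ∀ k, Summable fun x : ℕ => w x * (x : ℝ) ^ k) (p : ℝ[X]) :
    HasSum (fun x : ℕ => w x * p.eval (x : ℝ)) (momentFunctional w p) := by
  have h := hasSum_sum fun k (_ : k ∈ p.support) => (hw k).hasSum.mul_left (p.coeff k)
  convert! h using 2 with x
  rw [eval_eq_sum, sum_def, Finset.mul_sum]
  exact Finset.sum_congr rfl fun k _ => mul_left_comm _ _ _

theorem eq_zero_of_momentFunctional_mul_self (hw : ∀ k, Summable fun x : ℕ => w x * (x : ℝ) ^ k)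
    (hpos : ∀ x, 0 < w x) {p : ℝ[X]} (hp : momentFunctional w (p * p) = 0) : p = 0 := by
  have hsum := hasSum_momentFunctional hw (p * p)
  have hnonneg (x : ℕ) : 0 ≤ w x * (p * p).eval (x : ℝ) := by
    rw [eval_mul]
    exact mul_nonneg (hpos x).le (mul_self_nonneg _)
  rw [hp, hasSum_zero_iff_of_nonneg hnonneg] at hsum
  refine eq_zero_of_infinite_isRoot p
    ((Set.infinite_range_of_injective (Nat.cast_injective (R := ℝ))).mono ?_)
  rintro _ ⟨x, rfl⟩
  simpa [(hpos x).ne'] using congrFun hsum x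

theorem summable_mul_pow_of_ratio_tendsto_lt_one {l : ℝ} (hl : l < 1) (hw : ∀ᶠ x in atTop, w x ≠ 0)
    (h : Tendsto (fun x => ‖w (x + 1)‖ / ‖w x‖) atTop (𝓝 l)) (k : ℕ) :
    Summable fun x : ℕ => w x * (x : ℝ) ^ k := by
  refine summable_of_ratio_test_tendsto_lt_one hl ?_ ?_
  · filter_upwards [hw, eventually_ne_atTop 0] with x hwx hx
    positivity
  · have hratio : Tendsto (fun x : ℕ => ((x : ℝ) + 1) / x) atTop (𝓝 1) := by
      simpa [add_comm] using tendsto_add_mul_div_add_mul_atTop_nhds (1 : ℝ) 0 1 one_ne_zero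
    have hlim := h.mul (hratio.pow k)
    rw [one_pow, mul_one] at hlim
    refine hlim.congr fun x => ?_
    rw [norm_mul, norm_mul, norm_pow, norm_pow, Real.norm_natCast, Real.norm_natCast, div_pow,
      Nat.cast_succ, div_mul_div_comm]

end MomentFunctional

section Meixner

variable {γ μ : ℝ}

/-- The Meixner weight `μ ^ x Γ(γ + x) / (x! Γ(γ))` on the nonnegative integers. -/
noncomputable def meixnerWeight (γ μ : ℝ) (x : ℕ) : ℝ :=
  μ ^ x * Real.Gamma (γ + x) / (x.factorial * Real.Gamma γ)

theorem meixnerWeight_pos (hγ : 0 < γ) (hμ : 0 < μ) (x : ℕ) : 0 < meixnerWeight γ μ x := by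
  have := Real.Gamma_pos_of_pos hγ
  have := Real.Gamma_pos_of_pos (show 0 < γ + x by positivity)
  unfold meixnerWeight
  positivity

theorem mul_meixnerWeight_add_one (hγ : 0 < γ) (x : ℕ) :
    γ * meixnerWeight (γ + 1) μ x = (x + γ) * meixnerWeight γ μ x := by
  have hΓ := (Real.Gamma_pos_of_pos hγ).ne'
  have hx : γ + x ≠ 0 := by positivity
  simp only [meixnerWeight]
  rw [add_right_comm, Real.Gamma_add_one hx, Real.Gamma_add_one hγ.ne']
  field_simp
  ring

theorem mul_meixnerWeight_succ (hγ : 0 < γ) (x : ℕ) :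
    (x + 1) * meixnerWeight γ μ (x + 1) = γ * μ * meixnerWeight (γ + 1) μ x := by
  have hΓ := (Real.Gamma_pos_of_pos hγ).ne'
  simp only [meixnerWeight]
  rw [Nat.factorial_succ, Real.Gamma_add_one hγ.ne', Nat.cast_succ, Nat.cast_mul, Nat.cast_succ,
    add_right_comm γ 1, ← add_assoc, pow_succ]
  field_simp

theorem summable_meixnerWeight_mul_pow (hγ : 0 < γ) (hμ0 : 0 < μ) (hμ1 : μ < 1) (k : ℕ) :
    Summable fun x : ℕ => meixnerWeight γ μ x * (x : ℝ) ^ k := by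
  refine summable_mul_pow_of_ratio_tendsto_lt_one hμ1
    (.of_forall fun x => (meixnerWeight_pos hγ hμ0 x).ne') ?_ k
  have hlim := (tendsto_add_mul_div_add_mul_atTop_nhds γ 1 (1 : ℝ) one_ne_zero).const_mul μ
  rw [div_one, mul_one] at hlim
  refine hlim.congr fun x => ?_
  have hpos := meixnerWeight_pos hγ hμ0 x
  rw [Real.norm_of_nonneg (meixnerWeight_pos hγ hμ0 _).le, Real.norm_of_nonneg hpos.le,
    mul_div_assoc', div_eq_div_iff (by positivity) hpos.ne']
  linear_combination -μ * mul_meixnerWeight_add_one (μ := μ) hγ x - mul_meixnerWeight_succ hγ x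

/-- Summation of polynomials against the Meixner weight. -/
noncomputable def meixnerFunctional (γ μ : ℝ) : ℝ[X] →ₗ[ℝ] ℝ :=
  momentFunctional (meixnerWeight γ μ)

theorem hasSum_meixnerFunctional (hγ : 0 < γ) (hμ0 : 0 < μ) (hμ1 : μ < 1) (p : ℝ[X]) :
    HasSum (fun x : ℕ => meixnerWeight γ μ x * p.eval (x : ℝ)) (meixnerFunctional γ μ p) :=
  hasSum_momentFunctional (summable_meixnerWeight_mul_pow hγ hμ0 hμ1) p

theorem eq_zero_of_meixnerFunctional_mul_self (hγ : 0 < γ) (hμ0 : 0 < μ) (hμ1 : μ < 1) {p : ℝ[X]}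
    (hp : meixnerFunctional γ μ (p * p) = 0) : p = 0 :=
  eq_zero_of_momentFunctional_mul_self (summable_meixnerWeight_mul_pow hγ hμ0 hμ1)
    (meixnerWeight_pos hγ hμ0) hp

theorem mul_meixnerFunctional_add_one (hγ : 0 < γ) (hμ0 : 0 < μ) (hμ1 : μ < 1) (p : ℝ[X]) :
    γ * meixnerFunctional (γ + 1) μ p = meixnerFunctional γ μ ((X + C γ) * p) := by
  refine ((hasSum_meixnerFunctional (by positivity) hμ0 hμ1 p).mul_left γ).unique ?_
  refine (hasSum_meixnerFunctional hγ hμ0 hμ1 _).congr_fun fun x => ?_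
  simp only [eval_mul, eval_add, eval_X, eval_C]
  linear_combination p.eval (x : ℝ) * mul_meixnerWeight_add_one (μ := μ) hγ x

theorem mul_meixnerFunctional_add_one_taylor (hγ : 0 < γ) (hμ0 : 0 < μ) (hμ1 : μ < 1)
    (p : ℝ[X]) :
    γ * μ * meixnerFunctional (γ + 1) μ (taylor 1 p) = meixnerFunctional γ μ (X * p) := by
  refine ((hasSum_meixnerFunctional (by positivity) hμ0 hμ1 _).mul_left (γ * μ)).unique ?_
  have hshift := (hasSum_nat_add_iff' 1).2 (hasSum_meixnerFunctional hγ hμ0 hμ1 (X * p))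
  simp only [Finset.sum_range_one, Nat.cast_zero, eval_mul, eval_X, zero_mul, mul_zero,
    sub_zero] at hshift
  refine hshift.congr_fun fun x => ?_
  rw [taylor_eval, Nat.cast_succ]
  linear_combination -p.eval ((x : ℝ) + 1) * mul_meixnerWeight_succ (μ := μ) hγ x

variable {m : ℕ} {p q : ℝ[X]}

theorem mul_meixnerFunctional_add_one_mul_taylor (hγ : 0 < γ) (hμ0 : 0 < μ) (hμ1 : μ < 1) :
    γ * μ * meixnerFunctional (γ + 1) μ (q * taylor 1 p) =
      meixnerFunctional γ μ (X * taylor (-1) q * p) := by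
  have h := mul_meixnerFunctional_add_one_taylor hγ hμ0 hμ1 (taylor (-1) q * p)
  rwa [taylor_mul, taylor_taylor, add_neg_cancel, taylor_zero, ← mul_assoc] at h

theorem mem_orthogonalDegreeLT_meixnerFunctional_add_one (hγ : 0 < γ) (hμ0 : 0 < μ) (hμ1 : μ < 1)
    (hp : p ∈ orthogonalDegreeLT (meixnerFunctional γ μ) (m + 1)) :
    p ∈ orthogonalDegreeLT (meixnerFunctional (γ + 1) μ) m := by
  rw [mem_orthogonalDegreeLT] at hp ⊢
  intro q hq
  refine (mul_eq_zero.1 ?_).resolve_left hγ.ne'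
  rw [mul_meixnerFunctional_add_one hγ hμ0 hμ1, ← mul_assoc]
  exact hp _ (mul_mem_degreeLT_of_natDegree_le (natDegree_X_add_C γ).le hq)

theorem taylor_mem_orthogonalDegreeLT_meixnerFunctional_add_one (hγ : 0 < γ) (hμ0 : 0 < μ)
    (hμ1 : μ < 1) (hp : p ∈ orthogonalDegreeLT (meixnerFunctional γ μ) (m + 1)) :
    taylor 1 p ∈ orthogonalDegreeLT (meixnerFunctional (γ + 1) μ) m := by
  rw [mem_orthogonalDegreeLT] at hp ⊢
  intro q hq
  refine (mul_eq_zero.1 ?_).resolve_left (mul_pos hγ hμ0).ne'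
  rw [mul_meixnerFunctional_add_one_mul_taylor hγ hμ0 hμ1]
  exact hp _ (mul_mem_degreeLT_of_natDegree_le natDegree_X_le (taylor_mem_degreeLT.2 hq))

theorem sub_smul_taylor_mem_orthogonalDegreeLT_meixnerFunctional_add_one (hγ : 0 < γ) (hμ0 : 0 < μ)
    (hμ1 : μ < 1) (hp : p ∈ orthogonalDegreeLT (meixnerFunctional γ μ) m) :
    p - μ • taylor 1 p ∈ orthogonalDegreeLT (meixnerFunctional (γ + 1) μ) m := by
  rw [mem_orthogonalDegreeLT] at hp ⊢
  intro q hq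
  refine (mul_eq_zero.1 ?_).resolve_left hγ.ne'
  calc
    γ * meixnerFunctional (γ + 1) μ (q * (p - μ • taylor 1 p)) =
        γ * meixnerFunctional (γ + 1) μ (q * p) -
          γ * μ * meixnerFunctional (γ + 1) μ (q * taylor 1 p) := by
      rw [mul_sub, map_sub, mul_smul_comm, map_smul, smul_eq_mul, mul_sub, mul_assoc]
    _ = meixnerFunctional γ μ ((γ • q - X * (taylor (-1) q - q)) * p) := by
      rw [mul_meixnerFunctional_add_one hγ hμ0 hμ1,
        mul_meixnerFunctional_add_one_mul_taylor hγ hμ0 hμ1, ← map_sub, smul_eq_C_mul]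
      congr 1
      ring
    _ = 0 := hp _ (Submodule.sub_mem _ (Submodule.smul_mem _ γ hq)
      (X_mul_taylor_sub_self_mem_degreeLT hq (-1)))

theorem add_smul_taylor_sub_self_mem_orthogonalDegreeLT_meixnerFunctional_add_one (hγ : 0 < γ)
    (hμ0 : 0 < μ) (hμ1 : μ < 1) (hp : p ∈ orthogonalDegreeLT (meixnerFunctional γ μ) m) :
    p + (μ / (μ - 1)) • (taylor 1 p - p) ∈
      orthogonalDegreeLT (meixnerFunctional (γ + 1) μ) m := by
  have h_eq : p + (μ / (μ - 1)) • (taylor 1 p - p) = (1 - μ)⁻¹ • (p - μ • taylor 1 p) := by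
    have hμ : μ - 1 ≠ 0 := (sub_neg.2 hμ1).ne
    have hμ' : 1 - μ ≠ 0 := (sub_pos.2 hμ1).ne'
    match_scalars <;> field_simp <;> ring
  rw [h_eq]
  exact Submodule.smul_mem _ _
    (sub_smul_taylor_mem_orthogonalDegreeLT_meixnerFunctional_add_one hγ hμ0 hμ1 hp)

theorem IsMonicOrthogonal.taylor_one_sub_self_eq_smul (hγ : 0 < γ) (hμ0 : 0 < μ) (hμ1 : μ < 1)
    (hp : IsMonicOrthogonal (meixnerFunctional γ μ) (m + 1) p)
    (hq : IsMonicOrthogonal (meixnerFunctional γ μ) m q) :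
    taylor 1 p - p = ((m : ℝ) + 1) • (q + (μ / (μ - 1)) • (taylor 1 q - q)) := by
  have hp_orth : taylor 1 p - p ∈ orthogonalDegreeLT (meixnerFunctional (γ + 1) μ) m :=
    Submodule.sub_mem _
      (taylor_mem_orthogonalDegreeLT_meixnerFunctional_add_one hγ hμ0 hμ1 hp.mem_orthogonalDegreeLT)
      (mem_orthogonalDegreeLT_meixnerFunctional_add_one hγ hμ0 hμ1 hp.mem_orthogonalDegreeLT)
  have hq_orth := add_smul_taylor_sub_self_mem_orthogonalDegreeLT_meixnerFunctional_add_one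
    hγ hμ0 hμ1 hq.mem_orthogonalDegreeLT
  refine eq_of_mem_orthogonalDegreeLT
    (fun r => eq_zero_of_meixnerFunctional_mul_self (by positivity) hμ0 hμ1) hp_orth
    (Submodule.smul_mem _ _ hq_orth) ?_
  have hlead := taylor_sub_self_sub_smul_mem_degreeLT hp.natDegree_eq.le hq.natDegree_eq.le
    (hp.coeff_eq_one.trans hq.coeff_eq_one.symm) 1
  have hq_diff := taylor_sub_self_mem_degreeLT hq.mem_degreeLT 1
  rw [mul_one] at hlead
  rw [smul_add, ← sub_sub]
  exact Submodule.sub_mem _ hlead (Submodule.smul_mem _ _ (Submodule.smul_mem _ _ hq_diff))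

end Meixner

section Recurrence

theorem poch_succ (a : ℝ) (k : ℕ) : poch a (k + 1) = poch a k * (a + k) :=
  Finset.prod_range_succ _ _

theorem poch_mul_pow_succ_of_lt {j m : ℕ} (hj : j < m) (a : ℝ) :
    poch ((j : ℝ) + 1) (m + 1 - j - 1) * a ^ (m + 1 - j - 1) =
      m * a * (poch ((j : ℝ) + 1) (m - j - 1) * a ^ (m - j - 1)) := by
  obtain ⟨i, rfl⟩ := Nat.exists_eq_add_of_lt hj
  rw [show j + i + 1 + 1 - j - 1 = i + 1 by omega, show j + i + 1 - j - 1 = i by omega,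
    poch_succ, pow_succ]
  push_cast
  ring

theorem eq_smul_sum_poch_of_recurrence {E : Type*} [AddCommGroup E] [Module ℝ E] {d r : ℕ → E}
    {a : ℝ} {n : ℕ} (hd0 : d 0 = 0)
    (hd : ∀ m < n, d (m + 1) = ((m : ℝ) + 1) • (r m + a • d m)) :
    d n = (n : ℝ) • ∑ j ∈ Finset.range n,
      (poch ((j : ℝ) + 1) (n - j - 1) * a ^ (n - j - 1)) • r j := by
  induction n with
  | zero => simpa using hd0
  | succ m ih =>
    have hsum : ∑ j ∈ Finset.range m,
        (poch ((j : ℝ) + 1) (m + 1 - j - 1) * a ^ (m + 1 - j - 1)) • r j = a • d m := by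
      rw [ih fun k hk => hd k (hk.trans m.lt_succ_self), smul_smul, mul_comm a, Finset.smul_sum]
      refine Finset.sum_congr rfl fun j hj => ?_
      rw [poch_mul_pow_succ_of_lt (Finset.mem_range.1 hj), mul_smul]
    rw [hd m m.lt_succ_self, Finset.sum_range_succ, hsum, add_comm (r m), Nat.cast_succ]
    simp [poch]

end Recurrence

/-- Expansion of the forward difference of the monic Meixner polynomial of degree `n`
in terms of the lower-degree monic Meixner polynomials of the same parameters. -/
theorem meixner_forward_difference_expansion
    (γ μ : ℝ) (hγ : 0 < γ) (hμ0 : 0 < μ) (hμ1 : μ < 1)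
    (n : ℕ) (hn : 1 ≤ n) (M : ℕ → Polynomial ℝ)
    (hmonic : ∀ j ≤ n, (M j).Monic) (hdeg : ∀ j ≤ n, (M j).natDegree = j)
    (horth : ∀ j ≤ n, ∀ k : ℕ, k < j →
      ∑' x : ℕ, (μ ^ x * Real.Gamma (γ + x) / (x.factorial * Real.Gamma γ)) *
        (M j).eval (x : ℝ) * (x : ℝ) ^ k = 0) :
    ∀ x : ℝ, (M n).eval (x + 1) - (M n).eval x =
      n * ∑ j ∈ Finset.range n,
        poch ((j : ℝ) + 1) (n - j - 1) * (μ / (μ - 1)) ^ (n - j - 1) * (M j).eval x := by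
  intro x
  have hM (j : ℕ) (hj : j ≤ n) : IsMonicOrthogonal (meixnerFunctional γ μ) j (M j) := by
    refine ⟨hmonic j hj, hdeg j hj, mem_orthogonalDegreeLT_iff_X_pow.2 fun k hk => ?_⟩
    rw [← (hasSum_meixnerFunctional hγ hμ0 hμ1 _).tsum_eq, ← horth j hj k hk]
    simp only [meixnerWeight, eval_mul, eval_pow, eval_X, mul_assoc, mul_comm]
  have hM0 : taylor 1 (M 0) - M 0 = 0 := by
    simp [(hmonic 0 n.zero_le).natDegree_eq_zero.1 (hdeg 0 n.zero_le)]
  have hexp := eq_smul_sum_poch_of_recurrence (d := fun m => taylor 1 (M m) - M m) hM0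
    fun m hm => (hM (m + 1) hm).taylor_one_sub_self_eq_smul hγ hμ0 hμ1 (hM m hm.le)
  simpa only [eval_sub, taylor_eval, eval_smul, eval_finsetSum, smul_eq_mul] using
    congrArg (eval x) hexp
end

section
/- Let N ≥ 1 be an integer, 0 < p < 1 real, and 1 ≤ n ≤ N−1 an integer. Then the forward difference of the monic Kravchuk polynomial of degree n satisfies, for all real x, K_n^p(x+1, N) − K_n^p(x, N) = n Σ_{j=0}^{n-1} (j+1)_{n-j-1} p^{n-j-1} K_j^p(x, N). -/
/-!
Write `Δ` for the forward difference. Summation by parts against the binomial weight shows that,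
if `f` and `g` are the monic Kravchuk polynomials of degrees `n + 1` and `n` for `N + 1` trials,
then `Δ f` and `g + p Δ g` are both orthogonal to all polynomials of degree less than `n` for `N`
trials. The binomial form is nondegenerate in low degrees, so comparing leading coefficients gives
`Δ f = (n + 1) (g + p Δ g)`, and iterating this recurrence in `n` yields the expansion.
Nondegeneracy follows by induction on the degree: a polynomial of degree at most `d` orthogonal to
all such polynomials has, by the same summation by parts, a difference that vanishes by induction,
so it is a constant, and its mean is zero.
-/

open Polynomial

lemma sum_range_succ_ascFactorial_mul_pow_smul {R V : Type*} [CommSemiring R] [AddCommMonoid V]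
    [Module R V] (p : R) (v : ℕ → V) (n : ℕ) :
    ∑ j ∈ Finset.range (n + 1),
        (((j + 1).ascFactorial (n + 1 - j - 1) : R) * p ^ (n + 1 - j - 1)) • v j =
      v n + (p * n) • ∑ j ∈ Finset.range n,
        (((j + 1).ascFactorial (n - j - 1) : R) * p ^ (n - j - 1)) • v j := by
  rw [Finset.sum_range_succ, add_comm, Finset.smul_sum]
  congr 1
  · simp
  · refine Finset.sum_congr rfl fun j hj ↦ ?_
    obtain ⟨i, rfl⟩ := Nat.exists_eq_add_of_lt (Finset.mem_range.1 hj)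
    rw [show j + i + 1 + 1 - j - 1 = i + 1 by omega, show j + i + 1 - j - 1 = i by omega,
      Nat.ascFactorial_succ, smul_smul]
    congr 1
    push_cast
    ring

section CommRing

variable {R : Type*} [CommRing R]

lemma X_mul_mem_degreeLT {f : R[X]} {d : ℕ} (hf : f ∈ degreeLT R d) :
    X * f ∈ degreeLT R (d + 1) := by
  rw [mem_degreeLT, degree_lt_iff_coeff_zero] at *
  intro i hi
  obtain ⟨i, rfl⟩ := Nat.exists_eq_add_one_of_ne_zero (by omega : i ≠ 0)
  rw [coeff_X_mul, hf i (by omega)]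

lemma mem_degreeLT_of_coeff_eq_zero {f : R[X]} {d : ℕ} (hf : f ∈ degreeLT R (d + 1))
    (hd : f.coeff d = 0) : f ∈ degreeLT R d := by
  rw [mem_degreeLT, degree_lt_iff_coeff_zero] at *
  intro i hi
  rcases hi.eq_or_lt with rfl | hi
  exacts [hd, hf i hi]

/-- The forward difference `f(x + 1) - f(x)` as an operator on polynomials; Mathlib's `fwdDiff`
acts on functions and does not record that the result is again a polynomial. -/
noncomputable def polynomialFwdDiff : R[X] →ₗ[R] R[X] := taylor 1 - LinearMap.id

lemma polynomialFwdDiff_apply (f : R[X]) : polynomialFwdDiff f = taylor 1 f - f := rfl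

lemma coeff_polynomialFwdDiff {f : R[X]} {n : ℕ} (hf : f ∈ degreeLT R (n + 2)) :
    (polynomialFwdDiff f).coeff n = (n + 1) * f.coeff (n + 1) := by
  have hfn : f.natDegree < n + 2 := by
    rcases eq_or_ne f 0 with rfl | h0
    · simp
    · exact (natDegree_lt_iff_degree_lt h0).2 (mem_degreeLT.1 hf)
  have hdeg : (hasseDeriv n f).natDegree < 2 :=
    (natDegree_hasseDeriv_le f n).trans_lt (by omega)
  rw [polynomialFwdDiff_apply, coeff_sub, taylor_coeff, eval_eq_sum_range' hdeg]
  simp [Finset.sum_range_succ, hasseDeriv_coeff, add_comm 1 n]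

lemma polynomialFwdDiff_mem_degreeLT {f : R[X]} {d : ℕ} (hf : f ∈ degreeLT R (d + 1)) :
    polynomialFwdDiff f ∈ degreeLT R d := by
  rw [mem_degreeLT, degree_lt_iff_coeff_zero]
  intro i hi
  have hfi : f ∈ degreeLT R (i + 2) := degreeLT_mono (by omega) hf
  rw [coeff_polynomialFwdDiff hfi,
    (degree_lt_iff_coeff_zero _ _).1 (mem_degreeLT.1 hf) (i + 1) (by omega), mul_zero]

/-- The expectation of `f(x)` for `x` binomially distributed with `N` trials and success
parameter `p`, that is, the functional `f ↦ ∑ ω(x) f(x)` for the Kravchuk weight `ω`. -/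
noncomputable def binomialMean (N : ℕ) (p : R) : R[X] →ₗ[R] R :=
  ∑ x ∈ Finset.range (N + 1), ((N.choose x : R) * p ^ x * (1 - p) ^ (N - x)) • leval (x : R)

lemma binomialMean_apply (N : ℕ) (p : R) (f : R[X]) :
    binomialMean N p f = ∑ x ∈ Finset.range (N + 1),
      (N.choose x : R) * p ^ x * (1 - p) ^ (N - x) * f.eval (x : R) := by
  simp [binomialMean]

lemma binomialMean_C (N : ℕ) (p c : R) : binomialMean N p (C c) = c := by
  have hmass : ∑ x ∈ Finset.range (N + 1), (N.choose x : R) * p ^ x * (1 - p) ^ (N - x) = 1 := by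
    calc _ = (p + (1 - p)) ^ N := by
          rw [add_pow]
          exact Finset.sum_congr rfl fun x _ ↦ by ring
      _ = 1 := by rw [add_sub_cancel, one_pow]
  simp only [binomialMean_apply, eval_C, ← Finset.sum_mul, hmass, one_mul]

lemma binomialMean_succ_X_mul (N : ℕ) (p : R) (f : R[X]) :
    binomialMean (N + 1) p (X * f) = (N + 1) * p * binomialMean N p (taylor 1 f) := by
  rw [binomialMean_apply, binomialMean_apply, Finset.sum_range_succ', Finset.mul_sum]
  simp only [eval_mul, eval_X, Nat.cast_zero, zero_mul, mul_zero, add_zero, taylor_eval]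
  refine Finset.sum_congr rfl fun x _ ↦ ?_
  have hchoose : ((N : R) + 1) * N.choose x = (N + 1).choose (x + 1) * (x + 1) := by
    exact_mod_cast congrArg (Nat.cast (R := R)) (Nat.add_one_mul_choose_eq N x)
  rw [Nat.add_sub_add_right, pow_succ]
  push_cast
  linear_combination -(p * p ^ x * (1 - p) ^ (N - x) * f.eval ((x : R) + 1)) * hchoose

lemma binomialMean_succ_sub_X_mul (N : ℕ) (p : R) (f : R[X]) :
    binomialMean (N + 1) p ((C ((N : R) + 1) - X) * f) =
      (N + 1) * (1 - p) * binomialMean N p f := by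
  rw [binomialMean_apply, binomialMean_apply, Finset.sum_range_succ, Finset.mul_sum]
  simp only [eval_mul, eval_sub, eval_C, eval_X, Nat.cast_add_one, sub_self, zero_mul, mul_zero,
    add_zero]
  refine Finset.sum_congr rfl fun x hx ↦ ?_
  have hx : x ≤ N := by simpa [Nat.lt_succ_iff] using hx
  have hchoose : (N.choose x : R) * (N + 1) = (N + 1).choose x * (N + 1 - x) := by
    have h := congrArg (Nat.cast (R := R)) (Nat.choose_mul_succ_eq N x)
    rw [Nat.cast_mul, Nat.cast_mul, Nat.cast_sub (by omega)] at h
    exact_mod_cast h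
  rw [Nat.sub_add_comm hx, pow_succ]
  linear_combination -((1 - p) * p ^ x * (1 - p) ^ (N - x) * f.eval (x : R)) * hchoose

/-- The symmetric bilinear form `(f, g) ↦ ∑ ω(x) f(x) g(x)` for the Kravchuk weight `ω`, with
respect to which the Kravchuk polynomials are orthogonal. -/
noncomputable def kravchukForm (N : ℕ) (p : R) : LinearMap.BilinForm R R[X] :=
  (LinearMap.mul R R[X]).compr₂ (binomialMean N p)

lemma kravchukForm_apply (N : ℕ) (p : R) (f g : R[X]) :
    kravchukForm N p f g = binomialMean N p (f * g) := rfl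

lemma mem_orthogonal_degreeLT_iff {N d : ℕ} {p : R} {f : R[X]} :
    f ∈ (kravchukForm N p).orthogonal (degreeLT R d) ↔ ∀ k < d, kravchukForm N p (X ^ k) f = 0 := by
  classical
  rw [degreeLT_eq_span_X_pow]
  change Submodule.span R _ ≤ LinearMap.ker ((kravchukForm N p).flip f) ↔ _
  simp [Submodule.span_le, Set.subset_def]

lemma kravchukForm_succ_X_mul_taylor (N : ℕ) (p : R) (f g : R[X]) :
    kravchukForm (N + 1) p (X * taylor (-1) g) f =
      (N + 1) * p * kravchukForm N p g (taylor 1 f) := by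
  rw [kravchukForm_apply, mul_assoc, binomialMean_succ_X_mul, taylor_mul, taylor_taylor,
    add_neg_cancel, taylor_zero, kravchukForm_apply]

lemma kravchukForm_succ_sub_X_mul (N : ℕ) (p : R) (f g : R[X]) :
    kravchukForm (N + 1) p ((C ((N : R) + 1) - X) * g) f =
      (N + 1) * (1 - p) * kravchukForm N p g f := by
  rw [kravchukForm_apply, mul_assoc, binomialMean_succ_sub_X_mul, kravchukForm_apply]

lemma kravchukForm_polynomialFwdDiff (N : ℕ) (p : R) (f g : R[X]) :
    (N + 1) * p * (1 - p) * kravchukForm N p g (polynomialFwdDiff f) =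
      kravchukForm (N + 1) p
        ((1 - p) • (X * taylor (-1) g) - p • ((C ((N : R) + 1) - X) * g)) f := by
  rw [map_sub, map_smul, map_smul, LinearMap.sub_apply, LinearMap.smul_apply,
    LinearMap.smul_apply, kravchukForm_succ_X_mul_taylor, kravchukForm_succ_sub_X_mul,
    polynomialFwdDiff_apply, map_sub, smul_eq_mul, smul_eq_mul]
  ring

lemma kravchukForm_add_smul_polynomialFwdDiff (N : ℕ) (p : R) (f g : R[X]) :
    (N + 1) * kravchukForm N p g (f + p • polynomialFwdDiff f) =
      kravchukForm (N + 1) p (X * taylor (-1) g + (C ((N : R) + 1) - X) * g) f := by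
  rw [map_add (kravchukForm (N + 1) p), LinearMap.add_apply, kravchukForm_succ_X_mul_taylor,
    kravchukForm_succ_sub_X_mul, polynomialFwdDiff_apply, map_add, map_smul, map_sub, smul_eq_mul]
  ring

lemma X_mul_taylor_add_sub_X_mul_mem_degreeLT {g : R[X]} {d : ℕ} (c : R)
    (hg : g ∈ degreeLT R d) : X * taylor (-1) g + (C c - X) * g ∈ degreeLT R d := by
  have hdiff : X * polynomialFwdDiff (taylor (-1) g) ∈ degreeLT R d := by
    cases d with
    | zero =>
      obtain rfl : g = 0 := by simpa [mem_degreeLT] using hg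
      simp
    | succ d => exact X_mul_mem_degreeLT (polynomialFwdDiff_mem_degreeLT (taylor_mem_degreeLT.2 hg))
  have hsplit : X * taylor (-1) g + (C c - X) * g =
      c • g - X * polynomialFwdDiff (taylor (-1) g) := by
    rw [polynomialFwdDiff_apply, taylor_taylor, add_neg_cancel, taylor_zero, smul_eq_C_mul]
    ring
  rw [hsplit]
  exact sub_mem (Submodule.smul_mem _ c hg) hdiff

/-- `f` is the monic Kravchuk polynomial `K_n^p(·, N)`: the monic polynomial of degree `n` that is
orthogonal to all polynomials of smaller degree. Over a domain of characteristic zero this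
determines `f` when `n ≤ N` and `p ≠ 0, 1`. -/
structure IsMonicKravchuk (N : ℕ) (p : R) (n : ℕ) (f : R[X]) : Prop where
  monic : f.Monic
  natDegree_eq : f.natDegree = n
  mem_orthogonal : f ∈ (kravchukForm N p).orthogonal (degreeLT R n)

namespace IsMonicKravchuk

variable {N n : ℕ} {p : R} {f : R[X]}

lemma mem_degreeLT_succ (hf : IsMonicKravchuk N p n f) : f ∈ degreeLT R (n + 1) := by
  refine mem_degreeLT.2 (degree_le_natDegree.trans_lt ?_)
  rw [hf.natDegree_eq]
  exact_mod_cast n.lt_succ_self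

lemma coeff_eq_one (hf : IsMonicKravchuk N p n f) : f.coeff n = 1 :=
  hf.natDegree_eq ▸ hf.monic.coeff_natDegree

lemma of_sum_mul_pow_eq_zero (hmonic : f.Monic) (hdeg : f.natDegree = n)
    (hsum : ∀ k < n, ∑ x ∈ Finset.range (N + 1),
      (N.choose x : R) * p ^ x * (1 - p) ^ (N - x) * f.eval (x : R) * (x : R) ^ k = 0) :
    IsMonicKravchuk N p n f where
  monic := hmonic
  natDegree_eq := hdeg
  mem_orthogonal := mem_orthogonal_degreeLT_iff.2 fun k hk ↦ by
    rw [← hsum k hk, kravchukForm_apply, mul_comm, binomialMean_apply]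
    simp only [eval_mul, eval_pow, eval_X, mul_assoc]

end IsMonicKravchuk

end CommRing

section IsDomain

variable {R : Type*} [CommRing R] [IsDomain R] [CharZero R]

lemma polynomialFwdDiff_mem_orthogonal {N d : ℕ} {p : R} (hp0 : p ≠ 0) (hp1 : p ≠ 1) {f : R[X]}
    (hf : f ∈ (kravchukForm (N + 1) p).orthogonal (degreeLT R (d + 1))) :
    polynomialFwdDiff f ∈ (kravchukForm N p).orthogonal (degreeLT R d) := by
  intro g hg
  have hscale : ((N : R) + 1) * p * (1 - p) ≠ 0 :=
    mul_ne_zero (mul_ne_zero (Nat.cast_add_one_ne_zero N) hp0) (sub_ne_zero.2 hp1.symm)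
  refine (mul_eq_zero.1 ?_).resolve_left hscale
  rw [kravchukForm_polynomialFwdDiff, sub_mul (C _) X g, ← smul_eq_C_mul]
  have hXg : X * g ∈ degreeLT R (d + 1) := X_mul_mem_degreeLT hg
  have hXτg : X * taylor (-1) g ∈ degreeLT R (d + 1) :=
    X_mul_mem_degreeLT (taylor_mem_degreeLT.2 hg)
  have hg' : g ∈ degreeLT R (d + 1) := degreeLT_mono d.le_succ hg
  exact hf _ (sub_mem (Submodule.smul_mem _ _ hXτg)
    (Submodule.smul_mem _ _ (sub_mem (Submodule.smul_mem _ _ hg') hXg)))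

lemma add_smul_polynomialFwdDiff_mem_orthogonal {N d : ℕ} {p : R} {f : R[X]}
    (hf : f ∈ (kravchukForm (N + 1) p).orthogonal (degreeLT R d)) :
    f + p • polynomialFwdDiff f ∈ (kravchukForm N p).orthogonal (degreeLT R d) := by
  intro g hg
  refine (mul_eq_zero.1 ?_).resolve_left (Nat.cast_add_one_ne_zero (R := R) N)
  rw [kravchukForm_add_smul_polynomialFwdDiff]
  exact hf _ (X_mul_taylor_add_sub_X_mul_mem_degreeLT _ hg)

lemma eq_C_of_polynomialFwdDiff_eq_zero {f : R[X]} (hf : polynomialFwdDiff f = 0) :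
    f = C (f.coeff 0) := by
  refine eq_C_of_natDegree_eq_zero (by_contra fun hdeg ↦ ?_)
  obtain ⟨n, hn⟩ := Nat.exists_eq_add_one_of_ne_zero hdeg
  have hmem : f ∈ degreeLT R (n + 2) :=
    mem_degreeLT.2 (degree_le_natDegree.trans_lt (by rw [hn]; exact_mod_cast n.succ.lt_succ_self))
  have hlead : ((n : R) + 1) * f.leadingCoeff = 0 := by
    rw [leadingCoeff, hn, ← coeff_polynomialFwdDiff hmem, hf, coeff_zero]
  have hzero : f = 0 :=
    leadingCoeff_eq_zero.1 ((mul_eq_zero.1 hlead).resolve_left (Nat.cast_add_one_ne_zero n))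
  simp [hzero] at hn

theorem disjoint_degreeLT_orthogonal_kravchukForm {N d : ℕ} {p : R} (hp0 : p ≠ 0) (hp1 : p ≠ 1)
    (hd : d ≤ N + 1) : Disjoint (degreeLT R d) ((kravchukForm N p).orthogonal (degreeLT R d)) := by
  rw [Submodule.disjoint_def]
  intro f hfd hf
  induction d generalizing N f with
  | zero => simpa [mem_degreeLT] using hfd
  | succ d ih =>
    have hdiff : polynomialFwdDiff f = 0 := by
      cases N with
      | zero =>
        obtain rfl : d = 0 := by omega
        simpa [mem_degreeLT] using polynomialFwdDiff_mem_degreeLT hfd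
      | succ N =>
        exact ih (by omega) _ (polynomialFwdDiff_mem_degreeLT hfd)
          (polynomialFwdDiff_mem_orthogonal hp0 hp1 hf)
    have hone : (1 : R[X]) ∈ degreeLT R (d + 1) :=
      mem_degreeLT.2 (degree_one_le.trans_lt (by exact_mod_cast d.succ_pos))
    have hconst : f = C (f.coeff 0) := eq_C_of_polynomialFwdDiff_eq_zero hdiff
    have hmean : kravchukForm N p 1 f = 0 := hf 1 hone
    rw [kravchukForm_apply, one_mul, hconst, binomialMean_C] at hmean
    rw [hconst, hmean, C_0]

theorem IsMonicKravchuk.polynomialFwdDiff_eq {N n : ℕ} {p : R} {f g : R[X]} (hp0 : p ≠ 0)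
    (hp1 : p ≠ 1) (hn : n < N) (hf : IsMonicKravchuk N p (n + 1) f)
    (hg : IsMonicKravchuk N p n g) :
    polynomialFwdDiff f = ((n : R) + 1) • (g + p • polynomialFwdDiff g) := by
  obtain ⟨M, rfl⟩ := Nat.exists_eq_add_one_of_ne_zero (by omega : N ≠ 0)
  have hfg : polynomialFwdDiff f - ((n : R) + 1) • g ∈ degreeLT R n := by
    refine mem_degreeLT_of_coeff_eq_zero (sub_mem
      (polynomialFwdDiff_mem_degreeLT hf.mem_degreeLT_succ)
      (Submodule.smul_mem _ _ hg.mem_degreeLT_succ)) ?_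
    rw [coeff_sub, coeff_smul, coeff_polynomialFwdDiff hf.mem_degreeLT_succ, hf.coeff_eq_one,
      hg.coeff_eq_one, smul_eq_mul, sub_self]
  have hdeg : polynomialFwdDiff f - ((n : R) + 1) • (g + p • polynomialFwdDiff g) ∈
      degreeLT R n := by
    rw [smul_add, ← sub_sub]
    exact sub_mem hfg (Submodule.smul_mem _ _
      (Submodule.smul_mem _ _ (polynomialFwdDiff_mem_degreeLT hg.mem_degreeLT_succ)))
  have horth : polynomialFwdDiff f - ((n : R) + 1) • (g + p • polynomialFwdDiff g) ∈
      (kravchukForm M p).orthogonal (degreeLT R n) :=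
    sub_mem (polynomialFwdDiff_mem_orthogonal hp0 hp1 hf.mem_orthogonal)
      (Submodule.smul_mem _ _ (add_smul_polynomialFwdDiff_mem_orthogonal hg.mem_orthogonal))
  exact sub_eq_zero.1 (Submodule.disjoint_def.1
    (disjoint_degreeLT_orthogonal_kravchukForm hp0 hp1 (by omega)) _ hdeg horth)

theorem kravchuk_forward_difference_expansion_general {N n : ℕ} {p : R} (hp0 : p ≠ 0)
    (hp1 : p ≠ 1) (hn : n ≤ N) {K : ℕ → R[X]} (hK : ∀ j ≤ n, IsMonicKravchuk N p j (K j)) :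
    polynomialFwdDiff (K n) = (n : R) • ∑ j ∈ Finset.range n,
      (((j + 1).ascFactorial (n - j - 1) : R) * p ^ (n - j - 1)) • K j := by
  induction n with
  | zero => simp [polynomialFwdDiff_apply,
      eq_one_of_monic_natDegree_zero (hK 0 le_rfl).monic (hK 0 le_rfl).natDegree_eq]
  | succ n ih =>
    rw [(hK (n + 1) le_rfl).polynomialFwdDiff_eq hp0 hp1 (by omega) (hK n n.le_succ),
      ih (by omega) fun j hj ↦ hK j (hj.trans n.le_succ),
      sum_range_succ_ascFactorial_mul_pow_smul, smul_smul, Nat.cast_add_one]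

end IsDomain

lemma poch_natCast (m k : ℕ) : poch (m : ℝ) k = (m.ascFactorial k : ℝ) := by
  rw [poch, Nat.ascFactorial_eq_prod_range]
  push_cast
  rfl

/-- Expansion of the forward difference of the monic Kravchuk polynomial of degree `n`
in terms of the lower-degree monic Kravchuk polynomials with the same parameters. -/
theorem kravchuk_forward_difference_expansion
    (N : ℕ) (hN : 1 ≤ N) (p : ℝ) (hp0 : 0 < p) (hp1 : p < 1)
    (n : ℕ) (hn1 : 1 ≤ n) (hnN : n ≤ N - 1)
    (K : ℕ → Polynomial ℝ)
    (hmonic : ∀ j ≤ n, (K j).Monic) (hdeg : ∀ j ≤ n, (K j).natDegree = j)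
    (horth : ∀ j ≤ n, ∀ k : ℕ, k < j →
      ∑ x ∈ Finset.range (N + 1), (N.choose x : ℝ) * p ^ x * (1 - p) ^ (N - x) *
        (K j).eval (x : ℝ) * (x : ℝ) ^ k = 0) :
    ∀ x : ℝ, (K n).eval (x + 1) - (K n).eval x =
      n * ∑ j ∈ Finset.range n,
        poch ((j : ℝ) + 1) (n - j - 1) * p ^ (n - j - 1) * (K j).eval x := by
  intro x
  have hexpand := kravchuk_forward_difference_expansion_general hp0.ne' hp1.ne
    (hnN.trans (N.sub_le 1))
    fun j hj ↦ IsMonicKravchuk.of_sum_mul_pow_eq_zero (hmonic j hj) (hdeg j hj) (horth j hj)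
  simpa only [polynomialFwdDiff_apply, eval_sub, taylor_eval, eval_smul, eval_finsetSum,
    smul_eq_mul, ← poch_natCast, Nat.cast_add_one] using congrArg (eval x) hexpand
end

section
/- Let N ≥ 2 be an integer, 0 < p < 1 real, and 1 ≤ n ≤ N−1 an integer. Then the relative Fisher information of the monic Kravchuk polynomial satisfies [Σ_{x=0}^N ω(x)(K_n^p(x+1,N) − K_n^p(x,N))²] / [Σ_{x=0}^N ω(x) K_n^p(x,N)²] = n/((N−n+1) p (1−p)) · Σ_{k=0}^{n-1} ((1−n)_k/(N−n+2)_k) (p/(p−1))^k, where the finite sum is the terminating hypergeometric series ₂F₁(1−n, 1; N−n+2; p/(p−1)). -/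
/-! Write `E N` for the expectation under the binomial weight on `{0, …, N}` and `Δ` for the forward
difference. If `K` is orthogonal of degree `n + 1` for `E (N + 1)`, then `Δ K` is orthogonal of
degree `n` for `E N`: up to a scalar, the adjoint of `Δ` from `E N` to `E (N + 1)` acts on leading
terms as multiplication by `X`. The same adjoint relates the norms of `K` and `Δ K`. Pascal's rule
`E (N + 1) f = E N f + p * E N (Δ f)`, applied to `f = (Δ K) ^ 2`, loses its cross term by
orthogonality, and so relates the relative Fisher information of `K` for `N + 1` to that of `Δ K`
for `N`. As `N - n` does not change, the resulting recursion in `n` is a contiguous relation of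
`₂F₁(1 - n, 1; N - n + 2; p / (p - 1))`. -/

namespace Kravchuk

open Polynomial Finset

section CommRing

variable {R : Type*} [CommRing R]

/-- The forward difference `f(x) ↦ f(x + 1) - f(x)`, as an operator on polynomials. -/
noncomputable def forwardDiff : R[X] →ₗ[R] R[X] := taylor 1 - LinearMap.id

lemma forwardDiff_apply (f : R[X]) : forwardDiff f = taylor 1 f - f := rfl

lemma eval_forwardDiff (f : R[X]) (x : R) :
    (forwardDiff f).eval x = f.eval (x + 1) - f.eval x := by
  rw [forwardDiff_apply, eval_sub, taylor_eval]

lemma degree_taylor_sub_lt {f : R[X]} (hf : f ≠ 0) (r : R) : (taylor r f - f).degree < f.degree :=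
  (degree_sub_lt_left (degree_taylor f r) ((taylor_eq_zero r f).not.2 hf)
    (leadingCoeff_taylor r f)).trans_eq (degree_taylor f r)

lemma degree_forwardDiff_lt {f : R[X]} {n : ℕ} (hf : f.natDegree ≤ n) :
    (forwardDiff f).degree < n := by
  obtain rfl | hf0 := eq_or_ne f 0
  · simp
  · exact (degree_taylor_sub_lt hf0 1).trans_le (degree_le_of_natDegree_le hf)

lemma coeff_forwardDiff_of_natDegree_le {f : R[X]} {m : ℕ} (hf : f.natDegree ≤ m + 1) :
    (forwardDiff f).coeff m = (m + 1) * f.coeff (m + 1) := by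
  have hdeg : (hasseDeriv m f).natDegree < 2 :=
    (natDegree_hasseDeriv_le f m).trans_lt (by lia)
  rw [forwardDiff_apply, coeff_sub, taylor_coeff, eval_eq_sum_range' hdeg]
  simp [sum_range_succ, hasseDeriv_coeff, add_comm 1 m]

lemma degree_forwardDiff [NoZeroDivisors R] [CharZero R] {f : R[X]} {n : ℕ}
    (hf : f.degree = (n + 1 : ℕ)) : (forwardDiff f).degree = n := by
  have hnat : f.natDegree = n + 1 := natDegree_eq_of_degree_eq_some hf
  refine degree_eq_of_le_of_coeff_ne_zero ((degree_le_iff_coeff_zero _ _).2 fun m hm => ?_) ?_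
  · have hm : n < m := Nat.cast_lt.1 hm
    rw [coeff_forwardDiff_of_natDegree_le (by lia), coeff_eq_zero_of_natDegree_lt (by lia),
      mul_zero]
  · rw [coeff_forwardDiff_of_natDegree_le hnat.le]
    exact mul_ne_zero n.cast_add_one_ne_zero (coeff_ne_zero_of_eq_degree hf)

lemma degree_X_mul_forwardDiff_sub_lt {f : R[X]} {n : ℕ} (hf : f.natDegree ≤ n) :
    (X * forwardDiff f - C (n : R) * f : R[X]).degree < n := by
  refine (degree_lt_iff_coeff_zero _ _).2 fun m hm => ?_
  rw [coeff_sub, coeff_C_mul]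
  obtain _ | m := m
  · simp [Nat.le_zero.1 hm]
  rw [coeff_X_mul, coeff_forwardDiff_of_natDegree_le (hf.trans hm)]
  obtain rfl | hlt := hm.eq_or_lt
  · push_cast
    ring
  · simp [coeff_eq_zero_of_natDegree_lt (hf.trans_lt hlt)]

/-- The expectation of a polynomial under the binomial weight on `{0, …, N}` with parameter `p`,
as a linear functional. Nothing is assumed on `p`, so the weight need not be positive. -/
noncomputable def binomialExpectation (N : ℕ) (p : R) : R[X] →ₗ[R] R :=
  ∑ x ∈ range (N + 1), ((N.choose x : R) * p ^ x * (1 - p) ^ (N - x)) • leval (x : R)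

lemma binomialExpectation_apply (N : ℕ) (p : R) (f : R[X]) :
    binomialExpectation N p f =
      ∑ x ∈ range (N + 1), (N.choose x : R) * p ^ x * (1 - p) ^ (N - x) * f.eval (x : R) := by
  simp [binomialExpectation, LinearMap.sum_apply, leval]

lemma binomialExpectation_C (N : ℕ) (p a : R) : binomialExpectation N p (C a) = a := by
  have hsum : ∑ x ∈ range (N + 1), (N.choose x : R) * p ^ x * (1 - p) ^ (N - x) = 1 := by
    simpa [mul_assoc, mul_comm, mul_left_comm] using (add_pow p (1 - p) N).symm
  simp only [binomialExpectation_apply, eval_C, ← sum_mul, hsum, one_mul]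

lemma binomialExpectation_succ_X_mul (N : ℕ) (p : R) (f : R[X]) :
    binomialExpectation (N + 1) p (X * f) = (N + 1) * p * binomialExpectation N p (taylor 1 f) := by
  rw [binomialExpectation_apply, binomialExpectation_apply, sum_range_succ', mul_sum]
  simp only [eval_mul, eval_X, Nat.cast_zero, zero_mul, mul_zero, add_zero, taylor_eval]
  refine sum_congr rfl fun x _ => ?_
  have hchoose : ((N : R) + 1) * N.choose x = (N + 1).choose (x + 1) * (x + 1) := by
    exact_mod_cast congrArg (Nat.cast (R := R)) (Nat.add_one_mul_choose_eq N x)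
  rw [Nat.add_sub_add_right, pow_succ]
  push_cast
  linear_combination (-(p ^ x * p * (1 - p) ^ (N - x) * f.eval ((x : R) + 1))) * hchoose

lemma binomialExpectation_succ_sub_X_mul (N : ℕ) (p : R) (f : R[X]) :
    binomialExpectation (N + 1) p ((C (N + 1 : R) - X) * f) =
      (N + 1) * (1 - p) * binomialExpectation N p f := by
  rw [binomialExpectation_apply, binomialExpectation_apply, sum_range_succ, mul_sum]
  simp only [eval_mul, eval_sub, eval_C, eval_X, Nat.cast_add_one, sub_self, zero_mul, mul_zero,
    add_zero]
  refine sum_congr rfl fun x hx => ?_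
  have hxN : x ≤ N := Nat.lt_succ_iff.1 (mem_range.1 hx)
  have hchoose : (N.choose x : R) * (N + 1) = (N + 1).choose x * (N + 1 - x) := by
    have h := congrArg (Nat.cast (R := R)) (Nat.choose_mul_succ_eq N x)
    rw [Nat.cast_mul, Nat.cast_mul, Nat.cast_sub (by lia)] at h
    exact_mod_cast h
  rw [Nat.sub_add_comm hxN, pow_succ]
  linear_combination (-(p ^ x * (1 - p) ^ (N - x) * (1 - p) * f.eval (x : R))) * hchoose

/-- Condition on the last of the `N + 1` trials. -/
lemma binomialExpectation_succ (N : ℕ) (p : R) (f : R[X]) :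
    binomialExpectation (N + 1) p f =
      binomialExpectation N p f + p * binomialExpectation N p (forwardDiff f) := by
  simp only [binomialExpectation_apply, eval_forwardDiff]
  have hpascal := sum_choose_succ_mul (fun x y => p ^ x * (1 - p) ^ y * f.eval (x : R)) N
  simp only [← mul_assoc] at hpascal
  rw [hpascal, mul_sum, ← sum_add_distrib, ← sum_add_distrib]
  refine sum_congr rfl fun x hx => ?_
  rw [Nat.sub_add_comm (Nat.lt_succ_iff.1 (mem_range.1 hx)), pow_succ, pow_succ]
  push_cast
  ring

/-- The raising operator `f(x) ↦ (1 - p) x f(x - 1) - p (N - x) f(x)` of the Kravchuk polynomials,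
a multiple of the adjoint of the forward difference. -/
noncomputable def raising (N : ℕ) (p : R) (f : R[X]) : R[X] :=
  C (1 - p) * (X * taylor (-1) f) - C p * ((C (N : R) - X) * f)

lemma binomialExpectation_mul_raising (N : ℕ) (p : R) (f g : R[X]) :
    binomialExpectation (N + 1) p (f * raising (N + 1) p g) =
      (N + 1) * p * (1 - p) * binomialExpectation N p (forwardDiff f * g) := by
  have hexpand : f * raising (N + 1) p g =
      (1 - p) • (X * (f * taylor (-1) g)) - p • ((C (N + 1 : R) - X) * (f * g)) := by
    simp only [raising, smul_eq_C_mul, Nat.cast_add_one]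
    ring
  rw [hexpand, map_sub, map_smul, map_smul, binomialExpectation_succ_X_mul,
    binomialExpectation_succ_sub_X_mul, taylor_mul, taylor_taylor, add_neg_cancel, taylor_zero,
    forwardDiff_apply, sub_mul, map_sub, smul_eq_mul, smul_eq_mul]
  ring

lemma degree_X_mul_taylor_sub_le (r : R) (f : R[X]) : (X * (taylor r f - f)).degree ≤ f.degree := by
  obtain rfl | hf := eq_or_ne f 0
  · simp
  nontriviality R
  rw [X_mul, degree_mul_X]
  exact Nat.WithBot.add_one_le_of_lt (degree_taylor_sub_lt hf r)

lemma degree_raising_sub_X_mul_le (N : ℕ) (p : R) (f : R[X]) :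
    (raising N p f - X * f).degree ≤ f.degree := by
  have hexpand : raising N p f - X * f =
      (1 - p) • (X * (taylor (-1) f - f)) - (p * N) • f := by
    simp only [raising, smul_eq_C_mul, C_sub, C_1, C_mul]
    ring
  rw [hexpand]
  exact (degree_sub_le _ _).trans (max_le
    ((degree_smul_le _ _).trans (degree_X_mul_taylor_sub_le _ f)) (degree_smul_le _ f))

lemma degree_raising_lt (N : ℕ) (p : R) {f : R[X]} {n : ℕ} (hf : f.degree < n) :
    (raising N p f).degree < (n + 1 : ℕ) := by
  have hX : (X * f : R[X]).degree < (n + 1 : ℕ) := by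
    nontriviality R
    rw [X_mul, degree_mul_X, Nat.cast_add_one]
    exact WithBot.add_lt_add_right WithBot.one_ne_bot hf
  rw [← sub_add_cancel (raising N p f) (X * f)]
  exact (degree_add_le _ _).trans_lt (max_lt ((degree_raising_sub_X_mul_le N p f).trans_lt
    (hf.trans (Nat.cast_lt.2 n.lt_succ_self))) hX)

lemma degree_raising_forwardDiff_sub_lt (N : ℕ) (p : R) {f : R[X]} {n : ℕ}
    (hf : f.natDegree ≤ n) :
    (raising N p (forwardDiff f) - C (n : R) * f).degree < n := by
  rw [← sub_add_sub_cancel _ (X * forwardDiff f)]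
  exact (degree_add_le _ _).trans_lt (max_lt
    ((degree_raising_sub_X_mul_le N p _).trans_lt (degree_forwardDiff_lt hf))
    (degree_X_mul_forwardDiff_sub_lt hf))

/-- `K` is, up to normalization, the Kravchuk polynomial of degree `n`: it has degree `n` and is
orthogonal to all polynomials of lower degree for the binomial weight on `{0, …, N}`. -/
structure IsKravchuk (N : ℕ) (p : R) (n : ℕ) (K : R[X]) : Prop where
  degree_eq : K.degree = n
  orthogonal : ∀ f : R[X], f.degree < n → binomialExpectation N p (K * f) = 0

lemma IsKravchuk.of_X_pow {N n : ℕ} {p : R} {K : R[X]} (hdeg : K.degree = n)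
    (horth : ∀ k < n, binomialExpectation N p (K * X ^ k) = 0) : IsKravchuk N p n K where
  degree_eq := hdeg
  orthogonal f hf := by
    obtain rfl | hf0 := eq_or_ne f 0
    · simp
    rw [f.as_sum_range_C_mul_X_pow' ((natDegree_lt_iff_degree_lt hf0).2 hf), mul_sum, map_sum]
    refine sum_eq_zero fun k hk => ?_
    rw [mul_left_comm, ← smul_eq_C_mul, map_smul, horth k (mem_range.1 hk), smul_zero]

namespace IsKravchuk

variable {N n : ℕ} {p : R} {K : R[X]}

lemma ne_zero (hK : IsKravchuk N p n K) : K ≠ 0 :=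
  degree_ne_bot.1 (hK.degree_eq.trans_ne (WithBot.natCast_ne_bot n))

lemma degree_forwardDiff_lt (hK : IsKravchuk N p n K) : (forwardDiff K).degree < n :=
  Kravchuk.degree_forwardDiff_lt (natDegree_le_of_degree_le hK.degree_eq.le)

lemma expectation_sq_succ (hK : IsKravchuk N p n K) :
    binomialExpectation (N + 1) p (K ^ 2) =
      binomialExpectation N p (K ^ 2) + p * binomialExpectation N p (forwardDiff K ^ 2) := by
  have hΔsq : forwardDiff (K ^ 2) = (2 : R) • (K * forwardDiff K) + forwardDiff K ^ 2 := by
    simp only [forwardDiff_apply, taylor_pow, smul_eq_C_mul, C_ofNat]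
    ring
  rw [binomialExpectation_succ, hΔsq, map_add, map_smul,
    hK.orthogonal _ hK.degree_forwardDiff_lt, smul_zero, zero_add]

lemma succ_mul_expectation_sq (hK : IsKravchuk (N + 1) p (n + 1) K) :
    (n + 1) * binomialExpectation (N + 1) p (K ^ 2) =
      (N + 1) * p * (1 - p) * binomialExpectation N p (forwardDiff K ^ 2) := by
  have hlow := hK.orthogonal _ (degree_raising_forwardDiff_sub_lt (N + 1) p
    (natDegree_le_of_degree_le hK.degree_eq.le))
  rw [mul_sub, map_sub, binomialExpectation_mul_raising, mul_left_comm, ← smul_eq_C_mul, map_smul,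
    sub_eq_zero, smul_eq_mul, Nat.cast_add_one] at hlow
  rw [sq, sq, hlow]

variable [NoZeroDivisors R] [CharZero R]

lemma forwardDiff_succ (hK : IsKravchuk (N + 1) p (n + 1) K) (hp0 : p ≠ 0) (hp1 : p ≠ 1) :
    IsKravchuk N p n (forwardDiff K) where
  degree_eq := degree_forwardDiff hK.degree_eq
  orthogonal f hf := by
    have hraise := hK.orthogonal _ (degree_raising_lt (N + 1) p hf)
    rw [binomialExpectation_mul_raising] at hraise
    exact (mul_eq_zero.1 hraise).resolve_left
      (mul_ne_zero (mul_ne_zero N.cast_add_one_ne_zero hp0) (sub_ne_zero.2 hp1.symm))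

lemma expectation_sq_ne_zero (hK : IsKravchuk N p n K) (hn : n ≤ N) (hp0 : p ≠ 0) (hp1 : p ≠ 1) :
    binomialExpectation N p (K ^ 2) ≠ 0 := by
  induction n generalizing N K with
  | zero =>
    have hconst := eq_C_of_degree_eq_zero hK.degree_eq
    rw [hconst, ← C_pow, binomialExpectation_C]
    exact pow_ne_zero 2 fun h0 => hK.ne_zero (by rw [hconst, h0, C_0])
  | succ n ih =>
    obtain ⟨N, rfl⟩ := Nat.exists_eq_add_one_of_ne_zero (n.succ_pos.trans_le hn).ne'
    refine right_ne_zero_of_mul (a := (n + 1 : R)) ?_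
    rw [hK.succ_mul_expectation_sq]
    exact mul_ne_zero
      (mul_ne_zero (mul_ne_zero N.cast_add_one_ne_zero hp0) (sub_ne_zero.2 hp1.symm))
      (ih (hK.forwardDiff_succ hp0 hp1) (Nat.le_of_succ_le_succ hn))

end IsKravchuk

end CommRing

section Field

variable {𝕜 : Type*} [Field 𝕜]

/-- The relative Fisher information of `f`: the squared norm of its forward difference over its own
squared norm, for the binomial weight. -/
noncomputable def relativeFisher (N : ℕ) (p : 𝕜) (f : 𝕜[X]) : 𝕜 :=
  binomialExpectation N p (forwardDiff f ^ 2) / binomialExpectation N p (f ^ 2)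

/-- The terminating hypergeometric series `₂F₁(1 - n, 1; c; z)` for `n ≥ 1`. For `n = 0`, where
the series need not terminate, this is `0`. -/
noncomputable def terminatingHypergeometric (n : ℕ) (c z : 𝕜) : 𝕜 :=
  ∑ k ∈ range n,
    (ascPochhammer 𝕜 k).eval (1 - n : 𝕜) / (ascPochhammer 𝕜 k).eval c * z ^ k

lemma natCast_mul_ascPochhammer_eval_one_sub {R : Type*} [Ring R] (n : ℕ) :
    (n : R) * (ascPochhammer R n).eval (1 - n : R) = 0 := by
  obtain _ | n := n
  · simp
  · rw [Nat.cast_add_one, sub_add_cancel_right,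
      ascPochhammer_eval_neg_coe_nat_of_lt n.lt_succ_self, mul_zero]

/-- Truncation of a contiguous relation between `₂F₁(b - 1, 1; c; z)` and `₂F₁(b, 1; c; z)`; the
last summand is the truncation error. -/
lemma sum_range_ascPochhammer_contiguous (b : 𝕜) {c : 𝕜} (hc : ∀ k : ℕ, c + k ≠ 0) (z : 𝕜)
    (m : ℕ) :
    (c - b) * ∑ k ∈ range (m + 1),
        (ascPochhammer 𝕜 k).eval (b - 1) / (ascPochhammer 𝕜 k).eval c * z ^ k =
      c - 1 + (1 - b) * (1 - z) * ∑ k ∈ range m,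
        (ascPochhammer 𝕜 k).eval b / (ascPochhammer 𝕜 k).eval c * z ^ k +
      (1 - b) * (ascPochhammer 𝕜 m).eval b / (ascPochhammer 𝕜 m).eval c * z ^ m := by
  induction m with
  | zero =>
    simp only [zero_add, sum_range_one, range_zero, sum_empty, ascPochhammer_zero, eval_one,
      pow_zero, div_one]
    ring
  | succ m ih =>
    have hshift : (ascPochhammer 𝕜 (m + 1)).eval (b - 1) =
        (b - 1) * (ascPochhammer 𝕜 m).eval b := by
      rw [ascPochhammer_succ_left, eval_mul, eval_X, eval_comp, eval_add, eval_X, eval_one,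
        sub_add_cancel]
    have hcm : c + m ≠ 0 := hc m
    have hpoch : (ascPochhammer 𝕜 m).eval c ≠ 0 := fun h0 =>
      have ⟨k, _, hk⟩ := (ascPochhammer_eval_eq_zero_iff m c).1 h0
      hc k (by rw [hk, add_neg_cancel])
    rw [sum_range_succ, mul_add, ih, sum_range_succ, hshift, ascPochhammer_succ_eval,
      ascPochhammer_succ_eval]
    field_simp
    ring

lemma terminatingHypergeometric_succ (n : ℕ) {c : 𝕜} (hc : ∀ k : ℕ, c + k ≠ 0) (z : 𝕜) :
    (c + n - 1) * terminatingHypergeometric (n + 1) c z =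
      c - 1 + n * (1 - z) * terminatingHypergeometric n c z := by
  have h := sum_range_ascPochhammer_contiguous (1 - n : 𝕜) hc z n
  rw [sub_sub_cancel, natCast_mul_ascPochhammer_eval_one_sub, zero_div, zero_mul, add_zero,
    sub_sub_eq_add_sub, sub_sub (1 : 𝕜), ← Nat.cast_add_one] at h
  exact h

variable [CharZero 𝕜] {N n : ℕ} {p : 𝕜} {K : 𝕜[X]}

lemma IsKravchuk.relativeFisher_succ (hK : IsKravchuk (N + 1) p (n + 1) K) (hn : n ≤ N)
    (hp0 : p ≠ 0) (hp1 : p ≠ 1) :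
    relativeFisher (N + 1) p K =
      (n + 1) / ((N + 1) * p * (1 - p)) * (1 + p * relativeFisher N p (forwardDiff K)) := by
  have hΔK := hK.forwardDiff_succ hp0 hp1
  have hΔ := hΔK.expectation_sq_ne_zero hn hp0 hp1
  have hK0 := hK.expectation_sq_ne_zero (Nat.succ_le_succ hn) hp0 hp1
  have hnorm := hK.succ_mul_expectation_sq
  have hN : (N + 1 : 𝕜) ≠ 0 := N.cast_add_one_ne_zero
  have hq : 1 - p ≠ 0 := sub_ne_zero.2 hp1.symm
  rw [relativeFisher, relativeFisher, hΔK.expectation_sq_succ]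
  field_simp
  linear_combination (-(binomialExpectation N p (forwardDiff K ^ 2) +
    p * binomialExpectation N p (forwardDiff (forwardDiff K) ^ 2))) * hnorm

lemma IsKravchuk.relativeFisher_add_eq {M : ℕ} (hK : IsKravchuk (M + n) p n K)
    (hp0 : p ≠ 0) (hp1 : p ≠ 1) :
    relativeFisher (M + n) p K = n / ((M + 1) * p * (1 - p)) *
      terminatingHypergeometric n (M + 2 : 𝕜) (p / (p - 1)) := by
  induction n generalizing K with
  | zero =>
    rw [relativeFisher, eq_C_of_degree_eq_zero hK.degree_eq]
    simp [forwardDiff_apply]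
  | succ n ih =>
    have hM (k : ℕ) : (M : 𝕜) + 2 + k ≠ 0 := by
      exact_mod_cast (show M + 2 + k ≠ 0 by lia)
    have hM1 : (M : 𝕜) + 1 ≠ 0 := M.cast_add_one_ne_zero
    have hMn : (M : 𝕜) + n + 1 ≠ 0 := by exact_mod_cast (M + n).succ_ne_zero
    have hq : 1 - p ≠ 0 := sub_ne_zero.2 hp1.symm
    have hz : 1 - p / (p - 1) = 1 / (1 - p) := by
      rw [← neg_sub 1 p]
      field_simp
      ring
    have hcontiguous := terminatingHypergeometric_succ n hM (p / (p - 1))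
    rw [hz] at hcontiguous
    rw [← add_assoc] at hK ⊢
    rw [hK.relativeFisher_succ (Nat.le_add_left n M) hp0 hp1, ih (hK.forwardDiff_succ hp0 hp1)]
    push_cast
    field_simp at hcontiguous ⊢
    linear_combination (-1 : 𝕜) * hcontiguous

end Field

lemma poch_eq_eval_ascPochhammer (a : ℝ) (k : ℕ) : poch a k = (ascPochhammer ℝ k).eval a := by
  induction k with
  | zero => simp [poch]
  | succ k ih => rw [poch, prod_range_succ, ← poch, ih, ascPochhammer_succ_eval]

end Kravchuk

open Kravchuk Polynomial in
theorem kravchuk_relative_fisher_general {𝕜 : Type*} [Field 𝕜] [CharZero 𝕜]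
    {N n : ℕ} (hn : n ≤ N) {p : 𝕜} (hp0 : p ≠ 0) (hp1 : p ≠ 1) {K : 𝕜[X]} (hdeg : K.degree = n)
    (horth : ∀ k < n, ∑ x ∈ Finset.range (N + 1),
      (N.choose x : 𝕜) * p ^ x * (1 - p) ^ (N - x) * K.eval (x : 𝕜) * (x : 𝕜) ^ k = 0) :
    (∑ x ∈ Finset.range (N + 1), (N.choose x : 𝕜) * p ^ x * (1 - p) ^ (N - x) *
        (K.eval ((x : 𝕜) + 1) - K.eval (x : 𝕜)) ^ 2) /
      (∑ x ∈ Finset.range (N + 1), (N.choose x : 𝕜) * p ^ x * (1 - p) ^ (N - x) *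
        (K.eval (x : 𝕜)) ^ 2)
    = n / (((N : 𝕜) - n + 1) * p * (1 - p)) * ∑ k ∈ Finset.range n,
        (ascPochhammer 𝕜 k).eval (1 - (n : 𝕜)) / (ascPochhammer 𝕜 k).eval ((N : 𝕜) - n + 2) *
          (p / (p - 1)) ^ k := by
  obtain ⟨M, rfl⟩ := Nat.exists_eq_add_of_le' hn
  have hK : IsKravchuk (M + n) p n K := .of_X_pow hdeg fun k hk => by
    simpa [binomialExpectation_apply, mul_assoc] using horth k hk
  simpa [relativeFisher, binomialExpectation_apply, eval_forwardDiff, terminatingHypergeometric]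
    using hK.relativeFisher_add_eq hp0 hp1

/-- The relative Fisher information of the monic Kravchuk polynomial of degree
`1 ≤ n ≤ N-1` with respect to the binomial weight `ω(x) = C(N,x) p^x (1-p)^{N-x}`
equals `n/((N-n+1)p(1-p)) · ₂F₁(1-n, 1; N-n+2; p/(p-1))`. -/
theorem kravchuk_relative_fisher
    (N : ℕ) (hN : 2 ≤ N) (p : ℝ) (hp0 : 0 < p) (hp1 : p < 1)
    (n : ℕ) (hn1 : 1 ≤ n) (hnN : n ≤ N - 1)
    (K : Polynomial ℝ) (hmonic : K.Monic) (hdeg : K.natDegree = n)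
    (horth : ∀ k : ℕ, k < n →
      ∑ x ∈ Finset.range (N + 1), (N.choose x : ℝ) * p ^ x * (1 - p) ^ (N - x) *
        K.eval (x : ℝ) * (x : ℝ) ^ k = 0) :
    (∑ x ∈ Finset.range (N + 1), (N.choose x : ℝ) * p ^ x * (1 - p) ^ (N - x) *
        (K.eval ((x : ℝ) + 1) - K.eval (x : ℝ)) ^ 2) /
      (∑ x ∈ Finset.range (N + 1), (N.choose x : ℝ) * p ^ x * (1 - p) ^ (N - x) *
        (K.eval (x : ℝ)) ^ 2)
    = n / (((N : ℝ) - n + 1) * p * (1 - p)) *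
        ∑ k ∈ Finset.range n,
          poch (1 - (n : ℝ)) k / poch ((N : ℝ) - n + 2) k * (p / (p - 1)) ^ k := by
  simpa only [Kravchuk.poch_eq_eval_ascPochhammer] using kravchuk_relative_fisher_general (by lia)
    hp0.ne' hp1.ne (hdeg ▸ Polynomial.degree_eq_natDegree hmonic.ne_zero) horth
end

section
/- Let N ≥ 2 be an integer, 0 < p < 1 real, and 1 ≤ n ≤ N−1 an integer, and set d_j² = j! N! p^j (1−p)^j / (N−j)! for 0 ≤ j ≤ N. Then the finite-sum identity n² Σ_{j=0}^{n-1} ((j+1)_{n-j-1})² p^{2(n-1-j)} d_j² = d_n² · n/((N−n+1) p (1−p)) · Σ_{k=0}^{n-1} ((1−n)_k/(N−n+2)_k) (p/(p−1))^k holds. -/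
/-! The two sums agree term by term once the right-hand one is reversed, `k = n - 1 - j`: stepping
the squared norm from `d_j²` up to `d_n²` produces `(j+1)_{k+1} (N-n+1)_{k+1} (p(1-p))^{k+1}`. The
second symbol cancels the hypergeometric denominator, and the first one, paired with
`(1-n)_k = (-1)^k (j+1)_k`, gives `((j+1)_k)²`; the powers match because
`p(1-p) · (-1) · p/(p-1) = p²`. -/

open Finset Polynomial

theorem poch_eq_ascPochhammer_eval (a : ℝ) (k : ℕ) : poch a k = (ascPochhammer ℝ k).eval a := by
  induction k with
  | zero => simp [poch]
  | succ k ih => rw [ascPochhammer_succ_eval, ← ih, poch, prod_range_succ, poch]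

theorem ascPochhammer_eval_neg {R : Type*} [Ring R] (a : R) (k : ℕ) :
    (ascPochhammer R k).eval (-a) = (-1) ^ k * (ascPochhammer R k).eval (a - k + 1) := by
  rw [ascPochhammer_eval_neg_eq_descPochhammer, descPochhammer_eval_eq_ascPochhammer]

theorem ascPochhammer_succ_eval_left {R : Type*} [Semiring R] (a : R) (k : ℕ) :
    (ascPochhammer R (k + 1)).eval a = a * (ascPochhammer R k).eval (a + 1) := by
  induction k with
  | zero => simp
  | succ k ih =>
    rw [ascPochhammer_succ_eval, ih, ascPochhammer_succ_eval, mul_assoc, Nat.cast_succ,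
      add_assoc a 1, add_comm 1 (k : R)]

theorem ascPochhammer_eval_natCast_add_one_ne_zero (S : Type*) [Semiring S] [CharZero S]
    (n k : ℕ) : (ascPochhammer S k).eval ((n : S) + 1) ≠ 0 := by
  intro h
  have hfac := factorial_mul_ascPochhammer S n k
  rw [h, mul_zero] at hfac
  exact (n + k).factorial_ne_zero (mod_cast hfac.symm)

section Kravchuk

variable {K : Type*} [Field K]

/-- The squared norm `d_j²` of the monic Kravchuk polynomial of degree `j` for the weight
`binom(N,x) p^x (1-p)^(N-x)` on `{0, …, N}`, given by its closed form. It is meaningful only for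
`j ≤ N`, since `N - j` is a truncated subtraction. -/
def kravchukNormSq (N : ℕ) (p : K) (j : ℕ) : K :=
  (j.factorial : K) * (N.factorial : K) * p ^ j * (1 - p) ^ j / ((N - j).factorial : K)

variable [CharZero K]

theorem kravchukNormSq_add {N j m : ℕ} (h : j + m ≤ N) (p : K) :
    kravchukNormSq N p (j + m) =
      (ascPochhammer K m).eval ((j : K) + 1) *
        (ascPochhammer K m).eval ((N : K) - (j + m : ℕ) + 1) *
        (p * (1 - p)) ^ m * kravchukNormSq N p j := by
  obtain ⟨M, rfl⟩ := Nat.exists_eq_add_of_le' h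
  have hsub : M + (j + m) - j = M + m := by omega
  have hM : (M.factorial : K) ≠ 0 := mod_cast M.factorial_ne_zero
  have hMm : ((M + m).factorial : K) ≠ 0 := mod_cast (M + m).factorial_ne_zero
  rw [kravchukNormSq, kravchukNormSq, Nat.add_sub_cancel, hsub, Nat.cast_add M,
    add_sub_cancel_right, ← factorial_mul_ascPochhammer K j m, div_eq_iff hM]
  field_simp
  rw [← factorial_mul_ascPochhammer K M m, mul_pow]
  ring

theorem kravchuk_ladder_term_eq {N n j k : ℕ} (hn : j + k + 1 = n) (hnN : n ≤ N) {p : K}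
    (hp0 : p ≠ 0) (hp1 : p ≠ 1) :
    (n : K) ^ 2 *
        ((ascPochhammer K k).eval ((j : K) + 1) ^ 2 * p ^ (2 * k) * kravchukNormSq N p j) =
      kravchukNormSq N p n * ((n : K) / (((N : K) - n + 1) * p * (1 - p))) *
        ((ascPochhammer K k).eval (1 - (n : K)) / (ascPochhammer K k).eval ((N : K) - n + 2) *
          (p / (p - 1)) ^ k) := by
  have hq : 1 - p ≠ 0 := sub_ne_zero.mpr hp1.symm
  have hnK : (n : K) = j + 1 + k := by rw [← hn]; push_cast; ring
  have hupper : (ascPochhammer K k).eval (1 - (n : K)) =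
      (-1) ^ k * (ascPochhammer K k).eval ((j : K) + 1) := by
    rw [← neg_sub, ascPochhammer_eval_neg, hnK]
    congr 2
    ring
  have hnorm : kravchukNormSq N p n =
      ((ascPochhammer K k).eval ((j : K) + 1) * n) *
        (((N : K) - n + 1) * (ascPochhammer K k).eval ((N : K) - n + 2)) *
        (p * (1 - p)) ^ (k + 1) * kravchukNormSq N p j := by
    have h := kravchukNormSq_add (j := j) (m := k + 1) (hn.trans_le hnN) p
    rwa [← add_assoc, hn, ascPochhammer_succ_eval, ← hnK, ascPochhammer_succ_eval_left,
      add_assoc _ 1 1, one_add_one_eq_two] at h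
  have hfactor : (N : K) - n + 1 ≠ 0 := by
    rw [← Nat.cast_sub hnN]
    exact Nat.cast_add_one_ne_zero _
  have hlower : (ascPochhammer K k).eval ((N : K) - n + 2) ≠ 0 := by
    have h := ascPochhammer_eval_natCast_add_one_ne_zero K (N - n + 1) k
    rwa [Nat.cast_add_one, Nat.cast_sub hnN, add_assoc _ 1 1, one_add_one_eq_two] at h
  have hsign : (p * (1 - p)) ^ k * ((-1) ^ k * (p / (p - 1)) ^ k) = p ^ (2 * k) := by
    rw [← mul_pow, ← mul_pow, pow_mul, ← neg_sub 1 p]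
    congr 1
    field_simp
  rw [hupper, hnorm, ← hsign, pow_succ (p * (1 - p))]
  field_simp

theorem kravchuk_fisher_sum_identity_general {N n : ℕ} (hnN : n ≤ N) {p : K}
    (hp0 : p ≠ 0) (hp1 : p ≠ 1) :
    (n : K) ^ 2 * ∑ j ∈ range n,
        (ascPochhammer K (n - j - 1)).eval ((j : K) + 1) ^ 2 * p ^ (2 * (n - 1 - j)) *
          kravchukNormSq N p j =
      kravchukNormSq N p n * ((n : K) / (((N : K) - n + 1) * p * (1 - p))) *
        ∑ k ∈ range n,
          (ascPochhammer K k).eval (1 - (n : K)) / (ascPochhammer K k).eval ((N : K) - n + 2) *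
            (p / (p - 1)) ^ k := by
  rw [mul_sum, mul_sum, ← sum_range_reflect]
  refine sum_congr rfl fun k hk ↦ ?_
  have hkn : k < n := mem_range.mp hk
  have hreflect : n - (n - 1 - k) - 1 = k := by omega
  rw [hreflect, Nat.sub_sub_self (by omega)]
  exact kravchuk_ladder_term_eq (by omega) hnN hp0 hp1

end Kravchuk

/-- Finite-sum identity converting the ladder-expansion form of the relative Fisher
information of the Kravchuk polynomials into its hypergeometric closed form, where
`d_j² = j! N! p^j (1-p)^j / (N-j)!` are the squared norms of the monic Kravchuk
polynomials. -/
theorem kravchuk_fisher_sum_identity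
    (N : ℕ) (hN : 2 ≤ N) (p : ℝ) (hp0 : 0 < p) (hp1 : p < 1)
    (n : ℕ) (hn1 : 1 ≤ n) (hnN : n ≤ N - 1)
    (d2 : ℕ → ℝ)
    (hd2 : ∀ j ≤ N, d2 j = (j.factorial : ℝ) * (N.factorial : ℝ) * p ^ j * (1 - p) ^ j /
      ((N - j).factorial : ℝ)) :
    (n : ℝ) ^ 2 * ∑ j ∈ Finset.range n,
        (poch ((j : ℝ) + 1) (n - j - 1)) ^ 2 * p ^ (2 * (n - 1 - j)) * d2 j
    = d2 n * ((n : ℝ) / (((N : ℝ) - n + 1) * p * (1 - p))) *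
        ∑ k ∈ Finset.range n,
          poch (1 - (n : ℝ)) k / poch ((N : ℝ) - n + 2) k * (p / (p - 1)) ^ k := by
  have hd (j : ℕ) (hj : j ≤ n) : d2 j = kravchukNormSq N p j := hd2 j (by omega)
  rw [hd n le_rfl, sum_congr rfl fun j hj ↦ by rw [hd j (mem_range_le hj)]]
  simpa only [poch_eq_ascPochhammer_eval] using
    kravchuk_fisher_sum_identity_general (by omega) hp0.ne' hp1.ne
end

section
/- Let N ≥ 2 be a fixed integer and 1 ≤ n ≤ N−1 a fixed integer, and for 0 < p < 1 define G(p) = n/((N−n+1) p (1−p)) · Σ_{k=0}^{n-1} ((1−n)_k/(N−n+2)_k) (p/(p−1))^k. Then lim_{p→0⁺} p·G(p) = n/(N−n+1) and lim_{p→1⁻} (1−p)^n·G(p) = n!/((N−n+1)_n); that is, the relative Fisher information of the Kravchuk polynomials behaves as G(p) ~ n/((N−n+1)p) when p → 0 and as G(p) ~ n!/((N−n+1)_n (1−p)^n) when p → 1. -/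
/-!
In the variable `x = p / (p - 1)` the sum defining `G(p)` is a polynomial `∑ c_k x ^ k` of degree
`n - 1`. As `p → 0` also `x → 0`, and only `c_0 = 1` survives. As `p → 1` the variable `x` tends to
infinity, and `(p - 1) ^ (n - 1) * ∑ c_k x ^ k` tends to the leading coefficient
`(1 - n)_{n-1} / (N - n + 2)_{n-1}`, whose numerator is `(-1) ^ (n - 1) * (n - 1)!`.
-/

open Filter Finset Topology

section Pochhammer

theorem poch_zero (a : ℝ) : poch a 0 = 1 := by
  simp [poch]

theorem poch_succ_left (a : ℝ) (k : ℕ) : poch a (k + 1) = a * poch (a + 1) k := by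
  simp only [poch, prod_range_succ', Nat.cast_add, Nat.cast_one, Nat.cast_zero, add_zero,
    mul_comm a, add_assoc, add_comm (1 : ℝ)]

theorem poch_pos {a : ℝ} (ha : 0 < a) (k : ℕ) : 0 < poch a k :=
  prod_pos fun i _ => by positivity

theorem poch_neg_natCast_self (m : ℕ) : poch (-(m : ℝ)) m = (-1) ^ m * (m.factorial : ℝ) := by
  induction m with
  | zero => simp [poch_zero]
  | succ m ih =>
    have h : -((m + 1 : ℕ) : ℝ) + 1 = -(m : ℝ) := by
      push_cast
      ring
    rw [poch_succ_left, h, ih, Nat.factorial_succ]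
    push_cast
    ring

end Pochhammer

section PolynomialLimits

variable {α : Type*} {l : Filter α}

theorem tendsto_sum_range_succ_mul_pow_of_tendsto_zero {R : Type*} [Semiring R]
    [TopologicalSpace R] [IsTopologicalSemiring R] {x : α → R} (c : ℕ → R) (m : ℕ)
    (hx : Tendsto x l (𝓝 0)) :
    Tendsto (fun t => ∑ k ∈ range (m + 1), c k * x t ^ k) l (𝓝 (c 0)) := by
  have hlim := tendsto_finsetSum (range (m + 1)) fun k _ => (hx.pow k).const_mul (c k)
  simpa [sum_range_succ'] using hlim

variable {K : Type*} [Field K]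

theorem pow_mul_sum_range_succ_mul_div_pow (c : ℕ → K) (m : ℕ) {u : K} (hu : u ≠ 0) (v : K) :
    u ^ m * ∑ k ∈ range (m + 1), c k * (v / u) ^ k =
      ∑ k ∈ range (m + 1), c k * (v ^ k * u ^ (m - k)) := by
  rw [mul_sum]
  refine sum_congr rfl fun k hk => ?_
  rw [← pow_sub_mul_pow u (mem_range_succ_iff.mp hk), div_pow]
  field_simp

theorem tendsto_pow_mul_sum_range_succ_mul_div_pow [TopologicalSpace K] [IsTopologicalRing K]
    {u v : α → K} {y : K} (c : ℕ → K) (m : ℕ) (hu : Tendsto u l (𝓝[≠] 0))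
    (hv : Tendsto v l (𝓝 y)) :
    Tendsto (fun t => u t ^ m * ∑ k ∈ range (m + 1), c k * (v t / u t) ^ k) l
      (𝓝 (c m * y ^ m)) := by
  obtain ⟨hu_zero, hu_ne⟩ := tendsto_nhdsWithin_iff.mp hu
  have hlim := tendsto_finsetSum (range (m + 1)) fun k _ =>
    ((hv.pow k).mul (hu_zero.pow (m - k))).const_mul (c k)
  have hval : ∑ k ∈ range (m + 1), c k * (y ^ k * 0 ^ (m - k)) = c m * y ^ m := by
    rw [sum_range_succ, sum_eq_zero]
    · simp
    · intro k hk
      simp [Nat.sub_ne_zero_of_lt (mem_range.mp hk)]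
  rw [hval] at hlim
  refine hlim.congr' ?_
  filter_upwards [hu_ne] with t ht
  exact (pow_mul_sum_range_succ_mul_div_pow c m ht (v t)).symm

end PolynomialLimits

/-- The closed form `G(p)` of the relative Fisher information of the monic Kravchuk polynomial of
degree `n`, with the parameter `N` allowed to be any real number. -/
noncomputable def kravchukFisher (N : ℝ) (n : ℕ) (p : ℝ) : ℝ :=
  (n : ℝ) / ((N - n + 1) * p * (1 - p)) *
    ∑ k ∈ range n, poch (1 - (n : ℝ)) k / poch (N - n + 2) k * (p / (p - 1)) ^ k

theorem tendsto_mul_kravchukFisher_zero (N : ℝ) (n : ℕ) :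
    Tendsto (fun p => p * kravchukFisher N n p) (𝓝[≠] 0) (𝓝 (n / (N - n + 1))) := by
  cases n with
  | zero => simp [kravchukFisher]
  | succ m =>
    have hx : Tendsto (fun p : ℝ => p / (p - 1)) (𝓝 0) (𝓝 0) := by
      have hcont : ContinuousAt (fun p : ℝ => p / (p - 1)) 0 := by fun_prop (disch := norm_num)
      simpa using hcont.tendsto
    have hsum := tendsto_sum_range_succ_mul_pow_of_tendsto_zero
      (fun k => poch (1 - ((m + 1 : ℕ) : ℝ)) k / poch (N - (m + 1 : ℕ) + 2) k) m hx
    have hfactor : Tendsto (fun p : ℝ => ((m + 1 : ℕ) : ℝ) / (N - (m + 1 : ℕ) + 1) / (1 - p))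
        (𝓝 0) (𝓝 ((m + 1 : ℕ) / (N - (m + 1 : ℕ) + 1) / (1 - 0))) :=
      tendsto_const_nhds.div (tendsto_id.const_sub 1) (by norm_num)
    have hlim := (hfactor.mul hsum).mono_left (nhdsWithin_le_nhds (s := {0}ᶜ))
    simp only [poch_zero, div_one, mul_one, sub_zero] at hlim
    refine hlim.congr' ?_
    filter_upwards [self_mem_nhdsWithin] with p (hp : p ≠ 0)
    rw [kravchukFisher, ← mul_assoc]
    congr 1
    field_simp

theorem one_sub_pow_mul_kravchukFisher_succ (N : ℝ) (m : ℕ) {p : ℝ} (hp : p ≠ 1) :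
    (1 - p) ^ (m + 1) * kravchukFisher N (m + 1) p =
      (-1) ^ m * ((m + 1) / (N - m) / p) * ((p - 1) ^ m *
        ∑ k ∈ range (m + 1), poch (-(m : ℝ)) k / poch (N - m + 1) k * (p / (p - 1)) ^ k) := by
  have hbase : N - ((m + 1 : ℕ) : ℝ) + 1 = N - m := by push_cast; ring
  have hnum : 1 - ((m + 1 : ℕ) : ℝ) = -m := by push_cast; ring
  have hden : N - ((m + 1 : ℕ) : ℝ) + 2 = N - m + 1 := by push_cast; ring
  have hp_sub : 1 - p ≠ 0 := sub_ne_zero.mpr hp.symm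
  have hpow : (1 - p) ^ m = (-1) ^ m * (p - 1) ^ m := by rw [← neg_sub p 1, neg_pow]
  rw [kravchukFisher, hbase, hnum, hden, pow_succ, hpow, ← mul_assoc, ← mul_assoc]
  congr 1
  push_cast
  field_simp

theorem tendsto_one_sub_pow_mul_kravchukFisher_one (N : ℝ) (m : ℕ) :
    Tendsto (fun p => (1 - p) ^ (m + 1) * kravchukFisher N (m + 1) p) (𝓝[≠] 1)
      (𝓝 ((m + 1) / (N - m) * (m.factorial / poch (N - m + 1) m))) := by
  have hid : Tendsto (fun p : ℝ => p) (𝓝[≠] 1) (𝓝 1) := nhdsWithin_le_nhds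
  have hsub : Tendsto (fun p : ℝ => p - 1) (𝓝[≠] 1) (𝓝[≠] 0) := by
    refine tendsto_nhdsWithin_iff.mpr ⟨by simpa using hid.sub_const 1, ?_⟩
    filter_upwards [self_mem_nhdsWithin] with p hp using sub_ne_zero.mpr hp
  have hsum := tendsto_pow_mul_sum_range_succ_mul_div_pow
    (fun k => poch (-(m : ℝ)) k / poch (N - m + 1) k) m hsub hid
  have hfactor : Tendsto (fun p : ℝ => (-1) ^ m * ((m + 1) / (N - m) / p)) (𝓝[≠] 1)
      (𝓝 ((-1) ^ m * ((m + 1) / (N - m) / 1))) :=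
    (tendsto_const_nhds.div hid one_ne_zero).const_mul _
  have hval : (-1) ^ m * ((m + 1) / (N - m) / 1) *
      (poch (-(m : ℝ)) m / poch (N - m + 1) m * 1 ^ m) =
        (m + 1) / (N - m) * (m.factorial / poch (N - m + 1) m) := by
    have hsign : ((-1 : ℝ) ^ m) ^ 2 = 1 := by simp [← pow_mul]
    rw [poch_neg_natCast_self]
    linear_combination (m + 1) / (N - m) * (m.factorial / poch (N - m + 1) m) * hsign
  rw [← hval]
  refine (hfactor.mul hsum).congr' ?_
  filter_upwards [self_mem_nhdsWithin] with p hp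
  exact (one_sub_pow_mul_kravchukFisher_succ N m hp).symm

theorem kravchuk_fisher_p_asymptotics_general (N : ℝ) {n : ℕ} (hn : n ≠ 0)
    (hN : poch (N - n + 1) n ≠ 0) :
    Tendsto (fun p => p * kravchukFisher N n p) (𝓝[≠] 0) (𝓝 (n / (N - n + 1))) ∧
    Tendsto (fun p => (1 - p) ^ n * kravchukFisher N n p) (𝓝[≠] 1)
      (𝓝 (n.factorial / poch (N - n + 1) n)) := by
  refine ⟨tendsto_mul_kravchukFisher_zero N n, ?_⟩
  obtain ⟨m, rfl⟩ := Nat.exists_eq_succ_of_ne_zero hn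
  have hbase : N - ((m + 1 : ℕ) : ℝ) + 1 = N - m := by push_cast; ring
  rw [Nat.succ_eq_add_one, hbase, poch_succ_left] at hN ⊢
  obtain ⟨hbase_ne, hpoch_ne⟩ := mul_ne_zero_iff.mp hN
  convert tendsto_one_sub_pow_mul_kravchukFisher_one N m using 2
  rw [Nat.factorial_succ]
  push_cast
  field_simp

/-- Asymptotics of the relative Fisher information of the Kravchuk polynomials:
`G(p) ~ n/((N-n+1)p)` as `p → 0⁺` and `G(p) ~ n!/((N-n+1)_n (1-p)^n)` as `p → 1⁻`. -/
theorem kravchuk_fisher_p_asymptotics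
    (N : ℕ) (hN : 2 ≤ N) (n : ℕ) (hn1 : 1 ≤ n) (hnN : n ≤ N - 1) :
    Filter.Tendsto
      (fun p : ℝ => p *
        ((n : ℝ) / (((N : ℝ) - n + 1) * p * (1 - p)) *
          ∑ k ∈ Finset.range n,
            poch (1 - (n : ℝ)) k / poch ((N : ℝ) - n + 2) k * (p / (p - 1)) ^ k))
      (nhdsWithin 0 (Set.Ioo 0 1)) (nhds ((n : ℝ) / ((N : ℝ) - n + 1))) ∧
    Filter.Tendsto
      (fun p : ℝ => (1 - p) ^ n *
        ((n : ℝ) / (((N : ℝ) - n + 1) * p * (1 - p)) *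
          ∑ k ∈ Finset.range n,
            poch (1 - (n : ℝ)) k / poch ((N : ℝ) - n + 2) k * (p / (p - 1)) ^ k))
      (nhdsWithin 1 (Set.Ioo 0 1))
      (nhds ((n.factorial : ℝ) / poch ((N : ℝ) - n + 1) n)) := by
  have hle : (n : ℝ) ≤ N := by exact_mod_cast hnN.trans (Nat.sub_le N 1)
  obtain ⟨hzero, hone⟩ := kravchuk_fisher_p_asymptotics_general N (Nat.one_le_iff_ne_zero.mp hn1)
    (poch_pos (by linarith) n).ne'
  exact ⟨hzero.mono_left (nhdsWithin_mono 0 fun p hp => hp.1.ne'),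
    hone.mono_left (nhdsWithin_mono 1 fun p hp => hp.2.ne)⟩
end
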